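/- Let n ≥ 1, m ∈ ℝ and 1 ≥ ρ > δ ≥ 0. Assume σ ∈ S^m_{ρ,δ}(ℝⁿ) is real-valued with σ(x,ξ) ≥ 0 for all (x,ξ) ∈ ℝⁿ×ℝⁿ. Then for every η > 0 there exists a constant C_η > 0 such that for all f ∈ 𝒮(ℝⁿ): Re ∫_{ℝⁿ} Op^{KN}(σ)f(x) · conj(f(x)) dx ≥ −η ‖f‖²_{H^{(m+δ)/2}(ℝⁿ)} − C_η ‖f‖²_{H^{(m−(ρ−δ))/2}(ℝⁿ)}. (Euclidean analogue of the first part of Theorems 3.2 and 4.5: η-version of the Gårding inequality for non-negative symbols.) -/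

import Mathlib

open MeasureTheory Complex

noncomputable section

/-- `e^{2πit}`. -/
def expi (t : ℝ) : ℂ := Complex.exp (2 * (Real.pi : ℂ) * Complex.I * (t : ℂ))

/-- Dot product on `ℝⁿ`. -/
def dotp {n : ℕ} (x y : Fin n → ℝ) : ℝ := ∑ i, x i * y i

/-- Euclidean Fourier transform `𝓕f(ξ) = ∫ f(y) e^{-2πi y·ξ} dy`. -/
def FT {n : ℕ} (f : (Fin n → ℝ) → ℂ) (ξ : Fin n → ℝ) : ℂ :=
  ∫ y, f y * expi (-(dotp y ξ))

/-- Bargmann-type transform `B_a[f](x,ξ) = ∫ f(y) a(y-x) e^{-2πi y·ξ} dy`. -/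
def Barg {n : ℕ} (a f : (Fin n → ℝ) → ℂ) (x ξ : Fin n → ℝ) : ℂ :=
  ∫ y, f y * a (y - x) * expi (-(dotp y ξ))

/-- Wick quantization with window `a`. -/
def WickOp {n : ℕ} (a : (Fin n → ℝ) → ℂ) (σ : (Fin n → ℝ) → (Fin n → ℝ) → ℂ)
    (f : (Fin n → ℝ) → ℂ) (y : Fin n → ℝ) : ℂ :=
  ∫ p : (Fin n → ℝ) × (Fin n → ℝ),
    σ p.1 p.2 * Barg a f p.1 p.2 * (starRingEnd ℂ) (a (y - p.1)) * expi (dotp y p.2)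

/-- Kohn–Nirenberg quantization. -/
def OpKN {n : ℕ} (σ : (Fin n → ℝ) → (Fin n → ℝ) → ℂ) (f : (Fin n → ℝ) → ℂ)
    (x : Fin n → ℝ) : ℂ :=
  ∫ ξ, expi (dotp x ξ) * σ x ξ * FT f ξ

/-- Partial derivative in the `i`-th coordinate direction. -/
def pd {n : ℕ} (i : Fin n) (F : (Fin n → ℝ) → ℂ) : (Fin n → ℝ) → ℂ :=
  fun x => fderiv ℝ F x (Pi.single i 1)

/-- Multi-index derivative `∂^α`. -/
def md {n : ℕ} (α : Fin n → ℕ) (F : (Fin n → ℝ) → ℂ) : (Fin n → ℝ) → ℂ :=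
  (((List.finRange n).map fun i => (pd i)^[α i]).foldr (· ∘ ·) id) F

/-- Mixed derivative `∂_x^β ∂_ξ^α σ`. -/
def mixedD {n : ℕ} (β α : Fin n → ℕ) (σ : (Fin n → ℝ) → (Fin n → ℝ) → ℂ) :
    (Fin n → ℝ) → (Fin n → ℝ) → ℂ :=
  fun x ξ => md β (fun x' => md α (fun ξ' => σ x' ξ') ξ) x

/-- The weight `1 + |ξ|²` (Euclidean norm squared). -/
def wt {n : ℕ} (ξ : Fin n → ℝ) : ℝ := 1 + ∑ i, ξ i ^ 2

/-- Length `|α|` of a multi-index, as a real number. -/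
def mOrd {n : ℕ} (α : Fin n → ℕ) : ℝ := ∑ i, (α i : ℝ)

/-- The Hörmander class `S^m_{ρ,δ}(ℝⁿ)`. -/
def SymbolClass {n : ℕ} (m ρ δ : ℝ) (σ : (Fin n → ℝ) → (Fin n → ℝ) → ℂ) : Prop :=
  (ContDiff ℝ (⊤ : ℕ∞) fun p : (Fin n → ℝ) × (Fin n → ℝ) => σ p.1 p.2) ∧
  ∀ α β : Fin n → ℕ, ∃ C > 0, ∀ x ξ,
    ‖mixedD β α σ x ξ‖ ≤ C * wt ξ ^ ((m - ρ * mOrd α + δ * mOrd β) / 2)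

/-- The seminorm `‖σ‖_{S^m_{ρ,δ},α,β}`. -/
def hSem {n : ℕ} (m ρ δ : ℝ) (α β : Fin n → ℕ)
    (σ : (Fin n → ℝ) → (Fin n → ℝ) → ℂ) : ℝ :=
  ⨆ p : (Fin n → ℝ) × (Fin n → ℝ),
    wt p.2 ^ (-(m - ρ * mOrd α + δ * mOrd β) / 2) * ‖mixedD β α σ p.1 p.2‖

/-- Squared Sobolev norm `‖f‖²_{H^s}`. -/
def sobSq {n : ℕ} (s : ℝ) (f : (Fin n → ℝ) → ℂ) : ℝ :=
  ∫ ξ, wt ξ ^ s * ‖FT f ξ‖ ^ 2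

end


open MeasureTheory Complex

namespace GE
open MeasureTheory SchwartzMap FourierTransform Complex
open scoped LineDeriv ContDiff ComplexConjugate

variable {V : Type*} [NormedAddCommGroup V] [InnerProductSpace ℝ V] [FiniteDimensional ℝ V]
  [MeasurableSpace V] [BorelSpace V]

lemma expi_eq (t : ℝ) : expi t = Complex.exp (((2 * Real.pi * t : ℝ) : ℂ) * I) := by
  unfold expi; congr 1; push_cast; ring

lemma norm_expi (t : ℝ) : ‖expi t‖ = 1 := by
  rw [expi_eq, Complex.norm_exp_ofReal_mul_I]

lemma expi_add (s t : ℝ) : expi (s + t) = expi s * expi t := by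
  unfold expi; rw [← Complex.exp_add]; congr 1; push_cast; ring

lemma expi_zero : expi 0 = 1 := by simp [expi]

lemma conj_expi (t : ℝ) : conj (expi t) = expi (-t) := by
  rw [expi_eq, expi_eq, ← Complex.exp_conj]; congr 1
  simp only [map_mul, Complex.conj_ofReal, Complex.conj_I]; push_cast; ring

lemma contDiff_expi : ContDiff ℝ ∞ expi := by
  have : expi = fun t => Complex.exp (((2 * Real.pi * t : ℝ) : ℂ) * I) := funext expi_eq
  rw [this]
  refine ContDiff.cexp (ContDiff.mul ?_ contDiff_const)
  exact Complex.ofRealCLM.contDiff.comp (contDiff_const.mul contDiff_id)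

lemma continuous_expi : Continuous expi := contDiff_expi.continuous

lemma fourier_expi (f : V → ℂ) (w : V) : 𝓕 f w = ∫ v, expi (-(inner ℝ v w)) * f v := by
  rw [Real.fourier_eq']
  congr 1; ext v
  rw [expi_eq, smul_eq_mul]; congr 3; push_cast; ring

lemma fourierInv_expi (f : V → ℂ) (w : V) : 𝓕⁻ f w = ∫ v, expi (inner ℝ v w) * f v := by
  rw [Real.fourierInv_eq']
  congr 1; ext v
  rw [expi_eq, smul_eq_mul]

/-- the basic sesquilinear form -/
noncomputable def BF (a : V → V → ℂ) (v w : V → ℂ) : ℂ :=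
  ∫ x, (∫ θ, expi (inner ℝ x θ) * a x θ * v θ) * conj (w x)

lemma integrable_BF {a : V → V → ℂ} (ha : Continuous fun X : V × V => a X.1 X.2)
    {C : ℝ} (hC : ∀ x θ, ‖a x θ‖ ≤ C) (v w : 𝓢(V, ℂ)) :
    Integrable (fun X : V × V => expi (inner ℝ X.1 X.2) * a X.1 X.2 * v X.2 * conj (w X.1))
      (volume.prod volume) := by
  have h1 : Integrable (fun X : V × V => ‖w X.1‖ * ‖v X.2‖) (volume.prod volume) :=
    Integrable.mul_prod w.integrable.norm v.integrable.norm
  refine (h1.const_mul C).mono' ?_ ?_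
  · apply Continuous.aestronglyMeasurable
    have := v.continuous
    have := w.continuous
    have := continuous_expi
    fun_prop
  · refine Filter.Eventually.of_forall fun X => ?_
    simp only [norm_mul, norm_expi, one_mul, RCLike.norm_conj]
    have := hC X.1 X.2
    calc ‖a X.1 X.2‖ * ‖v X.2‖ * ‖w X.1‖ ≤ C * ‖v X.2‖ * ‖w X.1‖ := by gcongr
      _ = _ := by ring

lemma BF_prod {a : V → V → ℂ} (ha : Continuous fun X : V × V => a X.1 X.2)
    {C : ℝ} (hC : ∀ x θ, ‖a x θ‖ ≤ C) (v w : 𝓢(V, ℂ)) :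
    BF a v w = ∫ X : V × V, expi (inner ℝ X.1 X.2) * a X.1 X.2 * v X.2 * conj (w X.1)
      ∂(volume.prod volume) := by
  rw [integral_prod _ (integrable_BF ha hC v w)]
  unfold BF
  congr 1; ext x
  rw [← integral_mul_const]

lemma BF_symm {a : V → V → ℂ} (ha : Continuous fun X : V × V => a X.1 X.2)
    {C : ℝ} (hC : ∀ x θ, ‖a x θ‖ ≤ C) (v w : 𝓢(V, ℂ)) :
    BF a v w = ∫ θ, v θ * ∫ x, (expi (inner ℝ x θ) * a x θ) * conj (w x) := by
  rw [BF_prod ha hC, integral_prod_symm _ (integrable_BF ha hC v w)]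
  congr 1; ext x
  rw [← integral_const_mul]
  congr 1; ext y; ring

lemma BF_add {a b : V → V → ℂ} (ha : Continuous fun X : V × V => a X.1 X.2)
    {C : ℝ} (hC : ∀ x θ, ‖a x θ‖ ≤ C) (hb : Continuous fun X : V × V => b X.1 X.2)
    {D : ℝ} (hD : ∀ x θ, ‖b x θ‖ ≤ D) (v w : 𝓢(V, ℂ)) :
    BF (fun x θ => a x θ + b x θ) v w = BF a v w + BF b v w := by
  rw [BF_prod ha hC, BF_prod hb hD, BF_prod (C := C + D) (by fun_prop) (fun x θ =>
    (norm_add_le _ _).trans (add_le_add (hC x θ) (hD x θ))),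
    ← integral_add (integrable_BF ha hC v w) (integrable_BF hb hD v w)]
  congr 1; ext x; ring

/-- multiplication formula -/
lemma mult_formula (a g : 𝓢(V, ℂ)) (x : V) :
    ∫ θ, expi (inner ℝ x θ) * a θ * 𝓕 g θ = ∫ y, 𝓕 a (y - x) * g y := by
  have hi : Integrable (fun θ => expi (inner ℝ x θ) * a θ) := by
    refine a.integrable.norm.mono' ?_ ?_
    · apply Continuous.aestronglyMeasurable
      have := a.continuous
      have := continuous_expi
      fun_prop
    · exact Filter.Eventually.of_forall fun θ => by simp [norm_expi]
  have key := VectorFourier.integral_fourierIntegral_smul_eq_flip (L := innerₗ V)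
    (μ := volume) (ν := volume) Real.continuous_fourierChar continuous_inner hi g.integrable
  have e1 : ∀ y, VectorFourier.fourierIntegral Real.fourierChar volume (innerₗ V)
      (fun θ => expi (inner ℝ x θ) * a θ) y = 𝓕 a (y - x) := by
    intro y
    change 𝓕 (fun θ => expi (inner ℝ x θ) * a θ) y = _
    rw [SchwartzMap.fourier_coe, fourier_expi, fourier_expi]
    congr 1; ext θ
    rw [← mul_assoc, ← expi_add, inner_sub_right, real_inner_comm x θ]
    congr 2; ring
  have e2 : ∀ y, VectorFourier.fourierIntegral Real.fourierChar volume (innerₗ V).flip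
      g y = 𝓕 g y := by
    intro y
    rw [flip_innerₗ, SchwartzMap.fourier_coe]; rfl
  simp only [e1, e2, smul_eq_mul] at key
  exact key.symm

end GE

open MeasureTheory Complex

namespace GE
open MeasureTheory SchwartzMap FourierTransform Complex
open scoped LineDeriv ContDiff ComplexConjugate

set_option linter.unusedSectionVars false
variable {V : Type*} [NormedAddCommGroup V] [InnerProductSpace ℝ V] [FiniteDimensional ℝ V]
  [MeasurableSpace V] [BorelSpace V]

lemma schur_aux1 {k f : V → ℝ} (hk : Integrable k) (hf : Integrable f) :
    Integrable (fun p : V × V => k (p.2 - p.1) * f p.2) (volume.prod volume) ∧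
    ∫ p : V × V, k (p.2 - p.1) * f p.2 ∂(volume.prod volume) = (∫ u, k u) * ∫ u, f u := by
  have hk' : Integrable (fun u => k (-u)) := hk.comp_neg
  have h := hf.convolution_integrand (ContinuousLinearMap.mul ℝ ℝ) hk'
  have h2 : Integrable (fun p : V × V => k (p.2 - p.1) * f p.2) (volume.prod volume) := by
    refine h.congr (Filter.Eventually.of_forall fun p => ?_)
    simp [mul_comm]
  refine ⟨h2, ?_⟩
  rw [integral_prod_symm _ h2]
  simp only [integral_mul_const]
  simp_rw [integral_sub_left_eq_self k volume]
  rw [integral_const_mul]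

lemma schur_aux2 {k f : V → ℝ} (hk : Integrable k) (hf : Integrable f) :
    Integrable (fun p : V × V => k (p.2 - p.1) * f p.1) (volume.prod volume) ∧
    ∫ p : V × V, k (p.2 - p.1) * f p.1 ∂(volume.prod volume) = (∫ u, k u) * ∫ u, f u := by
  have h := (hf.convolution_integrand (ContinuousLinearMap.mul ℝ ℝ) hk).swap
  have h2 : Integrable (fun p : V × V => k (p.2 - p.1) * f p.1) (volume.prod volume) := by
    refine h.congr (Filter.Eventually.of_forall fun p => ?_)
    simp [mul_comm]
  refine ⟨h2, ?_⟩
  rw [integral_prod _ h2]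
  simp only [integral_mul_const]
  simp_rw [integral_sub_right_eq_self k]
  rw [integral_const_mul]

lemma schur {k : V → ℝ} (hk0 : ∀ u, 0 ≤ k u) (hk : Integrable k) {g w : V → ℂ}
    (hg : Integrable fun x => ‖g x‖ ^ 2) (hw : Integrable fun x => ‖w x‖ ^ 2)
    {F : V → V → ℂ} (hF : ∀ x y, ‖F x y‖ ≤ k (y - x) * ‖g y‖ * ‖w x‖) :
    ‖∫ x, ∫ y, F x y‖ ≤ (∫ u, k u) * ((∫ x, ‖g x‖ ^ 2) + ∫ x, ‖w x‖ ^ 2) := by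
  obtain ⟨i1, e1⟩ := schur_aux1 hk hg
  obtain ⟨i2, e2⟩ := schur_aux2 hk hw
  have i3 := i1.add i2
  rw [mul_add, ← e1, ← e2, ← integral_add i1 i2]
  rw [show (∫ a : V × V, k (a.2 - a.1) * ‖g a.2‖ ^ 2 + k (a.2 - a.1) * ‖w a.1‖ ^ 2 ∂volume.prod volume) = _ from integral_prod _ i3]
  refine norm_integral_le_of_norm_le i3.integral_prod_left ?_
  filter_upwards [i3.prod_right_ae] with x hx
  refine norm_integral_le_of_norm_le hx ?_
  refine Filter.Eventually.of_forall fun y => (hF x y).trans ?_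
  have := hk0 (y - x)
  have h3 : ‖g y‖ * ‖w x‖ ≤ ‖g y‖ ^ 2 + ‖w x‖ ^ 2 := by
    nlinarith [sq_nonneg (‖g y‖ - ‖w x‖), norm_nonneg (g y), norm_nonneg (w x), sq_nonneg ‖g y‖, sq_nonneg ‖w x‖]
  calc _ = k (y - x) * (‖g y‖ * ‖w x‖) := by ring
    _ ≤ k (y - x) * (‖g y‖ ^ 2 + ‖w x‖ ^ 2) := by gcongr
    _ = _ := by ring

lemma schwartz_sq (w : 𝓢(V, ℂ)) : Integrable fun x => ‖w x‖ ^ 2 := by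
  have := (w.memLp 2 volume).integrable_norm_pow (by norm_num)
  simpa using this

lemma fourier_decay (a : 𝓢(V, ℂ)) (N : ℕ) (K : Set V) (hK : IsCompact K)
    (hsupp : tsupport a ⊆ K) (B : ℝ) (hB : 0 ≤ B) (hb : ∀ k ≤ N, ∀ θ, ‖iteratedFDeriv ℝ k a θ‖ ≤ B) (w : V) :
    ‖w‖ ^ N * ‖𝓕 a w‖ ≤ 2 ^ N * (N + 1) * (volume.real K * B) := by
  have h := Real.pow_mul_norm_iteratedFDeriv_fourier_le (K := ⊤) (N := ⊤) (f := a) (k := 0) (n := N) (a.smooth _)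
    (fun k n _ _ => a.integrable_pow_mul_iteratedFDeriv volume k n) le_top le_top w
  simp only [norm_iteratedFDeriv_zero, pow_zero, one_mul, zero_add] at h
  rw [SchwartzMap.fourier_coe]
  refine h.trans ?_
  have hi : ∀ k ≤ N, ∫ v, ‖v‖ ^ 0 * ‖iteratedFDeriv ℝ k a v‖ ≤ volume.real K * B := by
    intro k hk
    have e : ∀ v, ‖v‖ ^ 0 * ‖iteratedFDeriv ℝ k a v‖ ≤ K.indicator (fun _ => B) v := by
      intro v
      rw [pow_zero, one_mul]
      by_cases hv : v ∈ K
      · rw [Set.indicator_of_mem hv]; exact hb k hk v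
      · rw [Set.indicator_of_notMem hv]
        have : iteratedFDeriv ℝ k a v = 0 := by
          by_contra hne
          exact hv (hsupp (support_iteratedFDeriv_subset (𝕜 := ℝ) k (Function.mem_support.2 hne)))
        simp [this]
    have hint : Integrable (K.indicator (fun _ : V => B)) := by
      rw [integrable_indicator_iff hK.measurableSet]
      exact integrableOn_const hK.measure_lt_top.ne
    calc _ ≤ ∫ v, K.indicator (fun _ => B) v :=
          integral_mono (a.integrable_pow_mul_iteratedFDeriv volume 0 k) hint e
      _ = _ := by rw [integral_indicator hK.measurableSet]; simp
  have hs : ∑ p ∈ Finset.range 1 ×ˢ Finset.range (N + 1), ∫ v, ‖v‖ ^ p.1 * ‖iteratedFDeriv ℝ p.2 a v‖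
      ≤ (N + 1) * (volume.real K * B) := by
    rw [Finset.sum_product]
    simp only [Finset.sum_range_one]
    refine (Finset.sum_le_card_nsmul _ _ _ (fun k hk => hi k (by simpa [Nat.lt_succ_iff] using hk))).trans ?_
    simp
  have : (2:ℝ) ^ N * ((N + 1) * (volume.real K * B)) = 2 ^ N * (N + 1) * (volume.real K * B) := by ring
  rw [← this]
  have h8 := mul_le_mul_of_nonneg_left hs (show (0:ℝ) ≤ 2 ^ N by positivity)
  simpa using h8

lemma mul_deriv_bound {Φ : V → ℂ} (hΦ : ContDiff ℝ ∞ Φ) (hc : HasCompactSupport Φ) (A : ℕ → ℝ) (N : ℕ) :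
    ∃ B : ℝ, 0 ≤ B ∧ ∀ (q : V → ℂ) (μ : ℝ), 0 ≤ μ → ContDiff ℝ ∞ q →
      (∀ θ ∈ tsupport Φ, ∀ k, ‖iteratedFDeriv ℝ k q θ‖ ≤ μ * A k) →
      ∀ k ≤ N, ∀ θ, ‖iteratedFDeriv ℝ k (fun θ => q θ * Φ θ) θ‖ ≤ μ * B := by
  have hS : ∀ j : ℕ, ∃ S : ℝ, 0 ≤ S ∧ ∀ θ, ‖iteratedFDeriv ℝ j Φ θ‖ ≤ S := by
    intro j
    obtain ⟨S, hS⟩ := (hc.iteratedFDeriv (𝕜 := ℝ) j).exists_bound_of_continuous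
      (hΦ.continuous_iteratedFDeriv (by exact_mod_cast le_top))
    exact ⟨S, (norm_nonneg _).trans (hS 0), hS⟩
  choose S hS0 hS using hS
  refine ⟨∑ k ∈ Finset.range (N + 1), ∑ i ∈ Finset.range (k + 1), (k.choose i : ℝ) * |A i| * S (k - i),
    Finset.sum_nonneg fun k _ => Finset.sum_nonneg fun i _ => by have := hS0 (k - i); positivity, ?_⟩
  intro q μ hμ hq hb k hk θ
  by_cases hθ : θ ∈ tsupport Φ
  · have h1 := norm_iteratedFDeriv_mul_le (𝕜 := ℝ) (n := k) (N := ∞) hq hΦ θ (by exact_mod_cast le_top)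
    refine h1.trans ?_
    have h2 : ∑ i ∈ Finset.range (k + 1), (k.choose i : ℝ) * ‖iteratedFDeriv ℝ i q θ‖ * ‖iteratedFDeriv ℝ (k - i) Φ θ‖
      ≤ μ * ∑ i ∈ Finset.range (k + 1), (k.choose i : ℝ) * |A i| * S (k - i) := by
      rw [Finset.mul_sum]
      refine Finset.sum_le_sum fun i _ => ?_
      have a1 := hb θ hθ i
      have a2 := hS (k - i) θ
      have a3 : μ * A i ≤ μ * |A i| := by gcongr; exact le_abs_self _
      calc _ ≤ (k.choose i : ℝ) * (μ * |A i|) * S (k - i) := by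
            gcongr; exact a1.trans a3
        _ = _ := by ring
    refine h2.trans ?_
    gcongr
    exact Finset.single_le_sum (f := fun k => ∑ i ∈ Finset.range (k + 1), (k.choose i : ℝ) * |A i| * S (k - i))
      (fun k _ => Finset.sum_nonneg fun i _ => by have := hS0 (k - i); positivity)
      (Finset.mem_range.2 (by omega))
  · have : iteratedFDeriv ℝ k (fun θ => q θ * Φ θ) θ = 0 := by
      by_contra hne
      have h1 := support_iteratedFDeriv_subset (𝕜 := ℝ) k (Function.mem_support.2 hne)
      exact hθ (closure_mono (Function.support_mul_subset_right q Φ) h1)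
    rw [this, norm_zero]
    refine mul_nonneg hμ (Finset.sum_nonneg fun k _ => Finset.sum_nonneg fun i _ => by have := hS0 (k - i); positivity)

/-- integrable kernel -/
noncomputable def ker (V : Type*) [NormedAddCommGroup V] [InnerProductSpace ℝ V] (u : V) : ℝ :=
  (1 + ‖u‖) ^ (-((Module.finrank ℝ V : ℝ) + 1))

lemma ker_nonneg (u : V) : 0 ≤ ker V u := by unfold ker; positivity

lemma ker_integrable : Integrable (ker V) := by
  unfold ker
  exact integrable_one_add_norm (by simp)

lemma le_ker {c B0 B1 : ℝ} {u : V} (hc : 0 ≤ c) (h0 : c ≤ B0)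
    (h1 : ‖u‖ ^ (Module.finrank ℝ V + 1) * c ≤ B1) : c ≤ 2 ^ (Module.finrank ℝ V) * (B0 + B1) * ker V u := by
  set d := Module.finrank ℝ V
  have e : ker V u = ((1 + ‖u‖) ^ (d + 1))⁻¹ := by
    unfold ker
    rw [Real.rpow_neg (by positivity)]
    congr 1
    exact_mod_cast Real.rpow_natCast (1 + ‖u‖) (d + 1)
  rw [e, ← div_eq_mul_inv, le_div_iff₀ (by positivity)]
  have h2 := add_pow_le (zero_le_one' ℝ) (norm_nonneg u) (d + 1)
  simp only [Nat.add_sub_cancel, one_pow] at h2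
  calc c * (1 + ‖u‖) ^ (d + 1) ≤ c * (2 ^ d * (1 + ‖u‖ ^ (d + 1))) := by gcongr
      _ = 2 ^ d * (c + ‖u‖ ^ (d + 1) * c) := by ring
      _ ≤ _ := by gcongr

lemma KL {Φ : V → ℂ} (hΦ : ContDiff ℝ ∞ Φ) (hc : HasCompactSupport Φ) (A : ℕ → ℝ) :
    ∃ C : ℝ, 0 ≤ C ∧ ∀ (q : V → V → ℂ) (μ : ℝ), 0 ≤ μ → (∀ x, ContDiff ℝ ∞ (q x)) →
      (∀ x, ∀ θ ∈ tsupport Φ, ∀ k, ‖iteratedFDeriv ℝ k (q x) θ‖ ≤ μ * A k) →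
      ∀ g w : 𝓢(V, ℂ), ‖BF (fun x θ => q x θ * Φ θ) ⇑(𝓕 g : 𝓢(V, ℂ)) w‖
        ≤ C * μ * ((∫ x, ‖g x‖ ^ 2) + ∫ x, ‖w x‖ ^ 2) := by
  set d := Module.finrank ℝ V
  obtain ⟨B, hB0, hB⟩ := mul_deriv_bound hΦ hc A (d + 1)
  set D := 2 ^ d * (2 ^ 0 * ((0:ℕ) + 1) * (volume.real (tsupport Φ) * B) +
    2 ^ (d + 1) * ((d + 1 : ℕ) + 1) * (volume.real (tsupport Φ) * B)) with hD
  have hD0 : 0 ≤ D := by positivity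
  refine ⟨D * ∫ u, ker V u, mul_nonneg hD0 (integral_nonneg ker_nonneg), ?_⟩
  intro q μ hμ hq hb g w
  have hbd := fun x => hB (q x) μ hμ (hq x) (hb x)
  have hcs : ∀ x, HasCompactSupport fun θ => q x θ * Φ θ := fun x => hc.mul_left
  set a : V → 𝓢(V, ℂ) := fun x => (hcs x).toSchwartzMap ((hq x).mul hΦ) with ha
  have hac : ∀ x θ, a x θ = q x θ * Φ θ := fun x θ => rfl
  have e : BF (fun x θ => q x θ * Φ θ) ⇑(𝓕 g : 𝓢(V, ℂ)) w = ∫ x, ∫ y, 𝓕 (a x) (y - x) * g y * conj (w x) := by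
    unfold BF
    congr 1; ext x
    rw [integral_mul_const, ← mult_formula]
    rfl
  rw [e]
  have hk : ∀ x u, ‖𝓕 (a x) u‖ ≤ μ * D * ker V u := by
    intro x u
    have hs : tsupport (a x) ⊆ tsupport Φ := closure_mono (Function.support_mul_subset_right (q x) Φ)
    have f0 := fourier_decay (a x) 0 (tsupport Φ) hc hs (μ * B) (by positivity)
      (fun k hk θ => hbd x k (by omega) θ) u
    have f1 := fourier_decay (a x) (d + 1) (tsupport Φ) hc hs (μ * B) (by positivity)
      (fun k hk θ => hbd x k hk θ) u
    rw [pow_zero, one_mul] at f0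
    refine (le_ker (norm_nonneg _) f0 f1).trans (le_of_eq ?_)
    rw [hD]; ring
  have := schur (k := fun u => μ * D * ker V u) (fun u => by have := ker_nonneg u; positivity)
    (ker_integrable.const_mul _) (schwartz_sq g) (schwartz_sq w)
    (F := fun x y => 𝓕 (a x) (y - x) * g y * conj (w x)) (fun x y => by
      simp only [norm_mul, RCLike.norm_conj]
      gcongr
      exact hk x _)
  refine this.trans (le_of_eq ?_)
  rw [integral_const_mul]; ring

end GE

open MeasureTheory Complex

namespace GE
open MeasureTheory SchwartzMap FourierTransform Complex
open scoped LineDeriv ContDiff ComplexConjugate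

set_option linter.unusedSectionVars false
set_option linter.unusedVariables false
set_option linter.deprecated false
variable {V : Type*} [NormedAddCommGroup V] [InnerProductSpace ℝ V] [FiniteDimensional ℝ V]
  [MeasurableSpace V] [BorelSpace V]

/-- symbols with controlled derivatives -/
structure Good (A : ℕ → ℝ) (μ : ℝ) (P : V × V → ℂ) : Prop where
  smooth : ContDiff ℝ ∞ P
  bdd : ∃ C, ∀ X, ‖P X‖ ≤ C
  bound : ∀ k, 1 ≤ k → ∀ X, ‖iteratedFDeriv ℝ k P X‖ ≤ μ * A k

lemma norm_slice_le {P : V × V → ℂ} (hP : ContDiff ℝ ∞ P) (x θ : V) (k : ℕ) :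
    ‖iteratedFDeriv ℝ k (fun θ => P (x, θ)) θ‖ ≤ ‖iteratedFDeriv ℝ k P (x, θ)‖ := by
  have e : (fun θ => P (x, θ)) = (fun X => P ((x, 0) + X)) ∘ (ContinuousLinearMap.inr ℝ V V) := by
    ext θ; simp
  have hs : ContDiff ℝ ∞ (fun X => P ((x, 0) + X)) := hP.comp (contDiff_const.add contDiff_id)
  rw [e, ContinuousLinearMap.iteratedFDeriv_comp_right _ hs _ (by exact_mod_cast le_top),
    iteratedFDeriv_comp_add_left]
  refine (ContinuousMultilinearMap.norm_compContinuousLinearMap_le _ _).trans ?_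
  simp only [ContinuousLinearMap.inr_apply, Prod.mk_add_mk, add_zero, zero_add]
  refine mul_le_of_le_one_right (norm_nonneg _) ?_
  exact Finset.prod_le_one (fun _ _ => norm_nonneg _) fun _ _ => ContinuousLinearMap.norm_inr_le_one _ _ _

lemma contDiff_slice {P : V × V → ℂ} (hP : ContDiff ℝ ∞ P) (x : V) : ContDiff ℝ ∞ (fun θ => P (x, θ)) :=
  hP.comp (contDiff_const.prodMk contDiff_id)

/-- x-derivative -/
noncomputable def DX (d : V) (P : V × V → ℂ) (X : V × V) : ℂ := fderiv ℝ P X (d, 0)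

lemma contDiff_DX {P : V × V → ℂ} (hP : ContDiff ℝ ∞ P) (d : V) : ContDiff ℝ ∞ (DX d P) :=
  (hP.fderiv_right (m := ∞) (by simp)).clm_apply contDiff_const

lemma norm_DX_le {A : ℕ → ℝ} {μ : ℝ} {P : V × V → ℂ} (h : Good A μ P) (d : V) (k : ℕ) (X : V × V) :
    ‖iteratedFDeriv ℝ k (DX d P) X‖ ≤ μ * (‖d‖ * A (k + 1)) := by
  have h1 := norm_iteratedFDeriv_clm_apply_const (𝕜 := ℝ) (f := fderiv ℝ P) (c := ((d, 0) : V × V)) (x := X)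
    (N := ∞) (n := k) (h.smooth.fderiv_right (m := ∞) (by simp)).contDiffAt (by exact_mod_cast le_top)
  rw [norm_iteratedFDeriv_fderiv] at h1
  have h2 := h.bound (k + 1) (by omega) X
  have h3 : ‖((d, 0) : V × V)‖ = ‖d‖ := by simp [Prod.norm_def]
  rw [h3] at h1
  refine h1.trans ?_
  calc _ ≤ ‖d‖ * (μ * A (k + 1)) := by gcongr
    _ = _ := by ring

lemma Good.DX {A : ℕ → ℝ} {μ : ℝ} {P : V × V → ℂ} (h : Good A μ P) (d : V) :
    Good (fun k => ‖d‖ * A (k + 1)) μ (DX d P) where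
  smooth := contDiff_DX h.smooth d
  bdd := ⟨_, fun X => by simpa using norm_DX_le h d 0 X⟩
  bound := fun k _ X => norm_DX_le h d k X

lemma bdd_mul {P : V × V → ℂ} (hP : Continuous P) (hb : ∃ C, ∀ X, ‖P X‖ ≤ C)
    {Φ : V → ℂ} (hΦ : Continuous Φ) (hc : HasCompactSupport Φ) :
    (Continuous fun X : V × V => P (X.1, X.2) * Φ X.2) ∧
      ∃ C : ℝ, ∀ x θ : V, ‖P (x, θ) * Φ θ‖ ≤ C := by
  obtain ⟨C, hC⟩ := hb
  obtain ⟨D, hD⟩ := hc.exists_bound_of_continuous hΦ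
  refine ⟨by fun_prop, C * D, fun x θ => ?_⟩
  rw [norm_mul]
  exact mul_le_mul (hC _) (hD _) (norm_nonneg _) ((norm_nonneg _).trans (hC (x, θ)))

/-- symbol factor of a first-order operator -/
noncomputable def lam (d θ : V) : ℂ := 1 + 2 * Real.pi * I * (inner ℝ d θ : ℝ)

lemma contDiff_lam (d : V) : ContDiff ℝ ∞ (lam d) := by
  unfold lam
  refine contDiff_const.add (contDiff_const.mul ?_)
  exact Complex.ofRealCLM.contDiff.comp (contDiff_const.inner ℝ contDiff_id)

lemma fderiv_expi_inner (θ d x : V) :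
    HasFDerivAt (fun x : V => expi (inner ℝ x θ))
      ((2 * Real.pi * I * expi (inner ℝ x θ)) • (Complex.ofRealCLM.comp (innerSL ℝ θ))) x := by
  have h0 : HasFDerivAt (fun x : V => (inner ℝ x θ : ℝ)) (innerSL ℝ θ) x := by
    have := (innerSL ℝ θ).hasFDerivAt (x := x)
    refine this.congr_of_eventuallyEq (Filter.Eventually.of_forall fun y => ?_)
    simp [real_inner_comm]
  have h1 : HasFDerivAt (fun x : V => ((inner ℝ x θ : ℝ) : ℂ)) (Complex.ofRealCLM.comp (innerSL ℝ θ)) x :=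
    Complex.ofRealCLM.hasFDerivAt.comp x h0
  have h2 := (h1.const_mul (2 * Real.pi * I)).cexp
  unfold expi
  refine h2.congr_fderiv ?_
  ext v; simp; ring

lemma ibp_x {P : V × V → ℂ} (hP : ContDiff ℝ ∞ P) (hb : ∃ C, ∀ X, ‖P X‖ ≤ C) (d : V)
    (hb' : ∃ C, ∀ X, ‖DX d P X‖ ≤ C) (w : 𝓢(V, ℂ)) (θ : V) :
    ∫ x, (expi (inner ℝ x θ) * P (x, θ)) * conj ((w - ∂_{d} w) x) =
      ∫ x, (expi (inner ℝ x θ) * (P (x, θ) * lam d θ)) * conj (w x) +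
      (expi (inner ℝ x θ) * DX d P (x, θ)) * conj (w x) := by
  have hexp := continuous_expi
  have hPc := hP.continuous
  have hDc := (contDiff_DX hP d).continuous
  have key : ∀ (Q : V × V → ℂ) (hQ : Continuous Q) (hb : ∃ C, ∀ X, ‖Q X‖ ≤ C) (u : 𝓢(V, ℂ)),
      Integrable fun x => (expi (inner ℝ x θ) * Q (x, θ)) * conj (u x) := by
    rintro Q hQ ⟨C, hC⟩ u
    refine (u.integrable.norm.const_mul C).mono' ?_ ?_
    · have := u.continuous
      apply Continuous.aestronglyMeasurable
      fun_prop
    · refine Filter.Eventually.of_forall fun x => ?_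
      simp only [norm_mul, norm_expi, one_mul, RCLike.norm_conj]
      have := hC (x, θ)
      gcongr
  have hF : ∀ x, HasFDerivAt (fun x => expi (inner ℝ x θ) * P (x, θ))
      (expi (inner ℝ x θ) • ((fderiv ℝ P (x, θ)).comp (ContinuousLinearMap.inl ℝ V V)) +
       P (x, θ) • ((2 * Real.pi * I * expi (inner ℝ x θ)) • (Complex.ofRealCLM.comp (innerSL ℝ θ)))) x := by
    intro x
    refine (fderiv_expi_inner θ d x).mul ?_
    have h1 : HasFDerivAt P (fderiv ℝ P (x, θ)) (x, θ) :=
      (hP.differentiable (by simp) (x, θ)).hasFDerivAt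
    exact h1.comp x (hasFDerivAt_prodMk_left x θ)
  have hFd : ∀ x, fderiv ℝ (fun x => expi (inner ℝ x θ) * P (x, θ)) x d =
      expi (inner ℝ x θ) * (P (x, θ) * (lam d θ - 1)) + expi (inner ℝ x θ) * DX d P (x, θ) := by
    intro x
    rw [(hF x).fderiv]
    simp [lam, DX, real_inner_comm]; ring
  have hcw : ∀ x, fderiv ℝ (fun x => conj (w x)) x d = conj ((∂_{d} w) x) := by
    intro x
    have h1 : HasFDerivAt (fun x => conj (w x)) ((Complex.conjCLE : ℂ →L[ℝ] ℂ).comp (fderiv ℝ w x)) x :=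
      (Complex.conjCLE : ℂ →L[ℝ] ℂ).hasFDerivAt.comp x (w.differentiableAt).hasFDerivAt
    rw [h1.fderiv, SchwartzMap.lineDerivOp_apply_eq_fderiv]; rfl
  have i1 := key P hPc hb w
  have i2 := key P hPc hb (∂_{d} w)
  have i3 := key (DX d P) hDc hb' w
  have i4 : Integrable fun x => (expi (inner ℝ x θ) * (P (x, θ) * (lam d θ - 1))) * conj (w x) := by
    refine (i1.const_mul (lam d θ - 1)).congr (Filter.Eventually.of_forall fun x => ?_)
    simp only; ring
  have ibp := integral_mul_fderiv_eq_neg_fderiv_mul_of_integrable (μ := volume) (v := d)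
    (f := fun x => expi (inner ℝ x θ) * P (x, θ)) (g := fun x => conj (w x))
    (by
      refine (i4.add i3).congr (Filter.Eventually.of_forall fun x => ?_)
      simp only [Pi.add_apply, hFd]; ring)
    (by simpa only [hcw] using i2) i1 (fun x _ => (hF x).differentiableAt)
    (fun x _ => (Complex.conjCLE : ℂ →L[ℝ] ℂ).differentiableAt.comp x w.differentiableAt)
  simp only [hcw, hFd] at ibp
  have e1 : (fun x => (expi (inner ℝ x θ) * P (x, θ)) * conj ((w - ∂_{d} w) x)) =
    fun x => (expi (inner ℝ x θ) * P (x, θ)) * conj (w x) - (expi (inner ℝ x θ) * P (x, θ)) * conj ((∂_{d} w) x) := by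
    ext x; rw [SchwartzMap.sub_apply, map_sub]; ring
  rw [e1, integral_sub i1 i2, ibp, sub_neg_eq_add, ← integral_add i1]
  · congr 1; ext x; ring
  · refine (i4.add i3).congr (Filter.Eventually.of_forall fun x => ?_)
    simp only [Pi.add_apply]; ring

lemma ibp_BF {P : V × V → ℂ} (hP : ContDiff ℝ ∞ P) (hb : ∃ C, ∀ X, ‖P X‖ ≤ C) (d : V)
    (hb' : ∃ C, ∀ X, ‖DX d P X‖ ≤ C) {Φ : V → ℂ} (hΦ : Continuous Φ) (hc : HasCompactSupport Φ) (v w : 𝓢(V, ℂ)) :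
    BF (fun x θ => P (x, θ) * Φ θ) v ⇑(w - ∂_{d} w) =
      BF (fun x θ => P (x, θ) * (lam d θ * Φ θ)) v w + BF (fun x θ => DX d P (x, θ) * Φ θ) v w := by
  have hl : Continuous (fun θ => lam d θ * Φ θ) := (contDiff_lam d).continuous.mul hΦ
  have hlc : HasCompactSupport (fun θ => lam d θ * Φ θ) := hc.mul_left
  obtain ⟨c1, C1, h1⟩ := bdd_mul hP.continuous hb hΦ hc
  obtain ⟨c2, C2, h2⟩ := bdd_mul hP.continuous hb hl hlc
  obtain ⟨c3, C3, h3⟩ := bdd_mul (contDiff_DX hP d).continuous hb' hΦ hc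
  rw [← BF_add c2 h2 c3 h3, BF_symm c1 h1, BF_symm (c2.add c3)
    (fun x θ => (norm_add_le _ _).trans (add_le_add (h2 x θ) (h3 x θ)))]
  congr 1; ext θ; congr 1
  have := ibp_x hP hb d hb' w θ
  have e1 : (fun x => expi (inner ℝ x θ) * (P (x, θ) * Φ θ) * conj ((w - ∂_{d} w) x)) =
      fun x => Φ θ * ((expi (inner ℝ x θ) * P (x, θ)) * conj ((w - ∂_{d} w) x)) := by ext x; ring
  rw [e1, integral_const_mul, this, ← integral_const_mul]
  congr 1; ext x; ring


/-- product of first order operators -/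
noncomputable def opL : List V → 𝓢(V, ℂ) → 𝓢(V, ℂ)
  | [], w => w
  | d :: L, w => opL L w - ∂_{d} (opL L w)

/-- its symbol -/
noncomputable def lamL : List V → V → ℂ
  | [], _ => 1
  | d :: L, θ => lam d θ * lamL L θ

lemma contDiff_lamL (L : List V) : ContDiff ℝ ∞ (lamL L) := by
  induction L with
  | nil => exact contDiff_const
  | cons d L ih => exact (contDiff_lam d).mul ih

lemma ibp_list (L : List V) : ∀ {Φ : V → ℂ} (hΦ : ContDiff ℝ ∞ Φ) (hc : HasCompactSupport Φ) (A : ℕ → ℝ),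
    ∃ C : ℝ, 0 ≤ C ∧ ∀ (P : V × V → ℂ) (μ : ℝ), 0 ≤ μ → Good A μ P → ∀ g w : 𝓢(V, ℂ),
      ‖BF (fun x θ => P (x, θ) * Φ θ) ⇑(𝓕 g : 𝓢(V, ℂ)) (opL L w) -
        BF (fun x θ => P (x, θ) * (lamL L θ * Φ θ)) ⇑(𝓕 g : 𝓢(V, ℂ)) w‖
        ≤ C * μ * ((∫ x, ‖g x‖ ^ 2) + ∫ x, ‖w x‖ ^ 2) := by
  induction L with
  | nil =>
    intro Φ hΦ hc A
    exact ⟨0, le_rfl, fun P μ _ _ g w => by simp [opL, lamL]⟩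
  | cons d L ih =>
    intro Φ hΦ hc A
    have hl : ContDiff ℝ ∞ (fun θ => lam d θ * Φ θ) := (contDiff_lam d).mul hΦ
    have hlc : HasCompactSupport (fun θ => lam d θ * Φ θ) := hc.mul_left
    have hL : ContDiff ℝ ∞ (fun θ => lamL L θ * Φ θ) := (contDiff_lamL L).mul hΦ
    have hLc : HasCompactSupport (fun θ => lamL L θ * Φ θ) := hc.mul_left
    obtain ⟨C1, h1, H1⟩ := ih hl hlc A
    obtain ⟨C2, h2, H2⟩ := ih hΦ hc (fun k => ‖d‖ * A (k + 1))
    obtain ⟨C3, h3, H3⟩ := KL hL hLc (fun k => ‖d‖ * A (k + 1))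
    refine ⟨C1 + C2 + C3, by positivity, fun P μ hμ hP g w => ?_⟩
    have a1 := H1 P μ hμ hP g w
    have a2 := H2 (DX d P) μ hμ (hP.DX d) g w
    have a3 := H3 (fun x θ => DX d P (x, θ)) μ hμ (fun x => contDiff_slice (contDiff_DX hP.smooth d) x)
      (fun x θ _ k => (norm_slice_le (contDiff_DX hP.smooth d) x θ k).trans (norm_DX_le hP d k _)) g w
    rw [opL, ibp_BF hP.smooth hP.bdd d (hP.DX d).bdd hΦ.continuous hc]
    have e : (fun x θ => P (x, θ) * (lamL (d :: L) θ * Φ θ)) =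
        fun x θ => P (x, θ) * (lamL L θ * (lam d θ * Φ θ)) := by
      ext x θ; rw [lamL]; ring
    rw [e]
    set b1 := BF (fun x θ => P (x, θ) * (lam d θ * Φ θ)) ⇑(𝓕 g : 𝓢(V, ℂ)) (opL L w)
    set b2 := BF (fun x θ => P (x, θ) * (lamL L θ * (lam d θ * Φ θ))) ⇑(𝓕 g : 𝓢(V, ℂ)) w
    set b3 := BF (fun x θ => DX d P (x, θ) * Φ θ) ⇑(𝓕 g : 𝓢(V, ℂ)) (opL L w)
    set b4 := BF (fun x θ => DX d P (x, θ) * (lamL L θ * Φ θ)) ⇑(𝓕 g : 𝓢(V, ℂ)) w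
    have e2 : b1 + b3 - b2 = (b1 - b2) + (b3 - b4) + b4 := by ring
    rw [e2]
    refine (norm_add₃_le).trans ?_
    calc _ ≤ _ := add_le_add (add_le_add a1 a2) a3
      _ = _ := by ring

/-- conjugated symbol -/
noncomputable def lamC (L : List V) (θ : V) : ℂ := conj (lamL L θ)

lemma fourier_opL (L : List V) (w : 𝓢(V, ℂ)) (θ : V) :
    𝓕 (opL L w) θ = lamC L θ * 𝓕 w θ := by
  induction L with
  | nil => simp [opL, lamC, lamL]
  | cons d L ih =>
    have : 𝓕 (opL (d :: L) w) = 𝓕 (opL L w) - 𝓕 (∂_{d} (opL L w)) := by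
      rw [opL, sub_eq_add_neg, FourierTransform.fourier_add, FourierTransform.fourier_neg, sub_eq_add_neg]
    rw [this, SchwartzMap.sub_apply, SchwartzMap.fourier_lineDerivOp_eq, SchwartzMap.smul_apply,
      SchwartzMap.smulLeftCLM_apply_apply (by fun_prop), ih]
    have h2 : (starRingEnd ℂ) 2 = 2 := Complex.conj_ofNat 2
    simp [lamC, lamL, lam, real_inner_comm, h2]; ring

lemma lam_ne (d θ : V) : lam d θ ≠ 0 := by
  intro h
  have := congrArg Complex.re h
  simp [lam] at this

lemma lamL_ne (L : List V) (θ : V) : lamL L θ ≠ 0 := by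
  induction L with
  | nil => simp [lamL]
  | cons d L ih => exact mul_ne_zero (lam_ne d θ) ih

lemma lam_div (d : V) (v : 𝓢(V, ℂ)) : ∃ v' : 𝓢(V, ℂ), ∀ θ, v θ = conj (lam d θ) * v' θ := by
  have h1 : Function.HasTemperateGrowth (fun t : ℝ => (1 + ‖t‖ ^ 2) ^ (-1 : ℝ)) :=
    Function.hasTemperateGrowth_one_add_norm_sq_rpow ℝ (-1)
  have h2 : Function.HasTemperateGrowth (fun θ : V => 2 * Real.pi * (inner ℝ d θ : ℝ)) := by
    have h3 := ((2 * Real.pi) • innerSL ℝ d : V →L[ℝ] ℝ).hasTemperateGrowth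
    exact h3
  have h3 : Function.HasTemperateGrowth (fun θ : V => (((1 + ‖2 * Real.pi * (inner ℝ d θ : ℝ)‖ ^ 2) ^ (-1 : ℝ) : ℝ) : ℂ)) :=
    Function.Complex.hasTemperateGrowth_ofReal.comp (h1.comp h2)
  have h4 : Function.HasTemperateGrowth (fun θ : V => lam d θ) := by
    unfold lam
    have : Function.HasTemperateGrowth (fun θ : V => ((inner ℝ d θ : ℝ) : ℂ)) :=
      Function.Complex.hasTemperateGrowth_ofReal.comp (Function.hasTemperateGrowth_inner_right d)
    exact (Function.HasTemperateGrowth.const _).add ((Function.HasTemperateGrowth.const _).mul this)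
  have h5 := h3.mul h4
  refine ⟨smulLeftCLM ℂ ((fun θ => (((1 + ‖2 * Real.pi * inner ℝ d θ‖ ^ 2) ^ (-1 : ℝ) : ℝ) : ℂ)) * fun θ => lam d θ) v,
    fun θ => ?_⟩
  rw [SchwartzMap.smulLeftCLM_apply_apply h5]
  have e : conj (lam d θ) * lam d θ = ((1 + ‖2 * Real.pi * (inner ℝ d θ : ℝ)‖ ^ 2 : ℝ) : ℂ) := by
    rw [← Complex.normSq_eq_conj_mul_self]
    congr 1
    simp only [Real.norm_eq_abs, sq_abs]
    simp [lam, Complex.normSq_apply]; ring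
  have hne : ((1 + ‖2 * Real.pi * (inner ℝ d θ : ℝ)‖ ^ 2 : ℝ) : ℂ) ≠ 0 := by
    have : (0:ℝ) < 1 + ‖2 * Real.pi * (inner ℝ d θ : ℝ)‖ ^ 2 := by positivity
    exact_mod_cast this.ne'
  simp only [Pi.mul_apply, smul_eq_mul]
  rw [Real.rpow_neg_one, Complex.ofReal_inv]
  calc v θ = (((1 + ‖2 * Real.pi * (inner ℝ d θ : ℝ)‖ ^ 2 : ℝ) : ℂ))⁻¹ *
      ((1 + ‖2 * Real.pi * (inner ℝ d θ : ℝ)‖ ^ 2 : ℝ) : ℂ) * v θ := by rw [inv_mul_cancel₀ hne, one_mul]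
    _ = _ := by rw [← e]; ring

lemma lamL_div (L : List V) : ∀ (v : 𝓢(V, ℂ)), ∃ v' : 𝓢(V, ℂ), ∀ θ, v θ = lamC L θ * v' θ := by
  induction L with
  | nil => exact fun v => ⟨v, fun θ => by simp [lamC, lamL]⟩
  | cons d L ih =>
    intro v
    obtain ⟨v1, h1⟩ := lam_div d v
    obtain ⟨v2, h2⟩ := ih v1
    refine ⟨v2, fun θ => ?_⟩
    rw [h1, h2]; simp only [lamC, lamL, map_mul]; ring

end GE

open MeasureTheory Complex

namespace GE
open MeasureTheory SchwartzMap FourierTransform Complex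
open scoped LineDeriv ContDiff ComplexConjugate

set_option linter.unusedSectionVars false
set_option linter.unusedVariables false
set_option linter.deprecated false
variable {V : Type*} [NormedAddCommGroup V] [InnerProductSpace ℝ V] [FiniteDimensional ℝ V]
  [MeasurableSpace V] [BorelSpace V]

lemma commutator {ψ : V → ℂ} (hψ : ContDiff ℝ ∞ ψ) (hc : HasCompactSupport ψ) :
    ∃ C : ℝ, 0 ≤ C ∧ ∀ (p : V → ℂ) (μ : ℝ), 0 ≤ μ → Continuous p → (∃ D, ∀ x, ‖p x‖ ≤ D) →
      (∀ x y, ‖p x - p y‖ ≤ μ * ‖x - y‖) → ∀ w : 𝓢(V, ℂ), ∃ g : V → ℂ,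
      ‖BF (fun x θ => p x * (conj (ψ θ) * ψ θ)) ⇑(𝓕 w : 𝓢(V, ℂ)) w - ∫ y, p y * (‖g y‖ ^ 2 : ℝ)‖
        ≤ C * μ * ∫ x, ‖w x‖ ^ 2 := by
  have hψc : ContDiff ℝ ∞ (fun θ => conj (ψ θ)) := (Complex.conjCLE : ℂ →L[ℝ] ℂ).contDiff.comp hψ
  have hcc : HasCompactSupport (fun θ => conj (ψ θ)) := hc.comp_left (g := conj) (by simp)
  set Ψ : 𝓢(V, ℂ) := hc.toSchwartzMap hψ with hΨ
  set Ψc : 𝓢(V, ℂ) := hcc.toSchwartzMap hψc with hΨc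
  set κ : 𝓢(V, ℂ) := 𝓕 Ψc with hκ
  obtain ⟨S, hS⟩ := hc.exists_bound_of_continuous hψ.continuous
  have hk1 : Integrable (fun u => ‖u‖ * ‖κ u‖) := by
    simpa using κ.integrable_pow_mul volume 1
  refine ⟨(∫ u, ‖u‖ * ‖κ u‖) * (S ^ 2 + 1), by positivity, ?_⟩
  rintro p μ hμ hpc ⟨D, hD⟩ hp w
  have htg : Function.HasTemperateGrowth ψ := hc.hasTemperateGrowth hψ
  set ĝ : 𝓢(V, ℂ) := smulLeftCLM ℂ ψ (𝓕 w) with hĝ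
  have hĝa : ∀ θ, ĝ θ = ψ θ * 𝓕 w θ := fun θ => by
    rw [hĝ, SchwartzMap.smulLeftCLM_apply_apply htg, smul_eq_mul]
  set g : 𝓢(V, ℂ) := 𝓕⁻ ĝ with hg
  have hFg : 𝓕 g = ĝ := FourierTransform.fourier_fourierInv_eq _
  have hgn : ∫ x, ‖g x‖ ^ 2 ≤ S ^ 2 * ∫ x, ‖w x‖ ^ 2 := by
    rw [← SchwartzMap.integral_norm_sq_fourier, ← SchwartzMap.integral_norm_sq_fourier w, hFg,
      ← integral_const_mul]
    refine integral_mono (schwartz_sq _) ((schwartz_sq _).const_mul _) fun θ => ?_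
    simp only [hĝa, norm_mul, mul_pow]
    gcongr
    exact hS θ
  -- formula for conj g
  have hcg : ∀ y, conj (g y) = ∫ x, κ (y - x) * conj (w x) := by
    intro y
    have e1 : g y = ∫ θ, expi (inner ℝ y θ) * Ψ θ * 𝓕 w θ := by
      rw [hg, SchwartzMap.fourierInv_coe, fourierInv_expi]
      congr 1; ext θ
      rw [hĝa, real_inner_comm]
      change _ = expi (inner ℝ y θ) * ψ θ * _
      ring
    rw [e1, mult_formula, ← integral_conj]
    congr 1; ext x
    rw [map_mul]
    congr 1
    rw [hκ, SchwartzMap.fourier_coe, SchwartzMap.fourier_coe, fourier_expi, fourier_expi, ← integral_conj]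
    congr 1; ext v
    rw [map_mul, conj_expi]
    congr 2
    rw [inner_sub_right, inner_sub_right]; ring
  have hfg : ∀ x, ∫ θ, expi (inner ℝ x θ) * (p x * (conj (ψ θ) * ψ θ)) * 𝓕 w θ = p x * ∫ y, κ (y - x) * g y := by
    intro x
    rw [hκ, ← mult_formula, hFg, ← integral_const_mul]
    congr 1; ext θ
    rw [hĝa]
    change _ = p x * (expi (inner ℝ x θ) * conj (ψ θ) * _)
    ring
  have hI : ∀ q : V × V → ℂ, Continuous q → (∀ X, ‖q X‖ ≤ D) →
      Integrable (fun X : V × V => q X * (κ (X.2 - X.1) * g X.2 * conj (w X.1))) (volume.prod volume) := by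
    intro q hq hqD
    obtain ⟨K, hK⟩ : ∃ K, ∀ u, ‖κ u‖ ≤ K := ⟨_, fun u => by simpa using SchwartzMap.norm_le_seminorm ℝ κ u⟩
    have h1 : Integrable (fun X : V × V => ‖w X.1‖ * ‖g X.2‖) (volume.prod volume) :=
      Integrable.mul_prod w.integrable.norm g.integrable.norm
    refine (h1.const_mul (D * K)).mono' ?_ (Filter.Eventually.of_forall fun X => ?_)
    · apply Continuous.aestronglyMeasurable
      have := κ.continuous
      have := g.continuous
      have := w.continuous
      fun_prop
    · simp only [norm_mul, RCLike.norm_conj]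
      have h2 := hqD X
      have h3 := hK (X.2 - X.1)
      have : 0 ≤ D := (norm_nonneg _).trans h2
      calc _ ≤ D * (K * ‖g X.2‖ * ‖w X.1‖) := by gcongr
        _ = _ := by ring
  have i1 := hI (fun X => p X.1) (by fun_prop) (fun X => hD _)
  have i2 := hI (fun X => p X.2) (by fun_prop) (fun X => hD _)
  have E1 : BF (fun x θ => p x * (conj (ψ θ) * ψ θ)) ⇑(𝓕 w : 𝓢(V, ℂ)) w =
      ∫ X : V × V, p X.1 * (κ (X.2 - X.1) * g X.2 * conj (w X.1)) ∂(volume.prod volume) := by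
    rw [integral_prod _ i1]
    unfold BF
    congr 1; ext x
    rw [hfg, mul_assoc, ← integral_mul_const, ← integral_const_mul]
  have E2 : ∫ y, p y * (‖g y‖ ^ 2 : ℝ) =
      ∫ X : V × V, p X.2 * (κ (X.2 - X.1) * g X.2 * conj (w X.1)) ∂(volume.prod volume) := by
    rw [integral_prod_symm _ i2]
    congr 1; ext y
    have : ((‖g y‖ ^ 2 : ℝ) : ℂ) = g y * conj (g y) := by
      rw [Complex.mul_conj, Complex.normSq_eq_norm_sq]
    rw [this, hcg, ← integral_const_mul, ← integral_const_mul]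
    congr 1; ext x; ring
  refine ⟨g, ?_⟩
  rw [E1, E2, ← integral_sub i1 i2]
  refine (congrArg norm (integral_prod _ (i1.sub i2))).le.trans ?_
  refine (schur (k := fun u => μ * (‖u‖ * ‖κ u‖)) (fun u => by positivity) (hk1.const_mul _) (schwartz_sq g)
    (schwartz_sq w) (fun x y => ?_)).trans ?_
  · rw [Pi.sub_apply, ← sub_mul]
    simp only [norm_mul, RCLike.norm_conj]
    have := hp x y
    rw [norm_sub_rev x y] at this
    calc _ ≤ (μ * ‖y - x‖) * (‖κ (y - x)‖ * ‖g y‖ * ‖w x‖) := by gcongr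
      _ = _ := by ring
  · rw [integral_const_mul]
    have : 0 ≤ ∫ u, ‖u‖ * ‖κ u‖ := by positivity
    calc _ ≤ μ * (∫ u, ‖u‖ * ‖κ u‖) * (S ^ 2 * (∫ x, ‖w x‖ ^ 2) + ∫ x, ‖w x‖ ^ 2) := by gcongr
      _ = _ := by ring

lemma Good.lip {A : ℕ → ℝ} {μ : ℝ} {P : V × V → ℂ} (h : Good A μ P) (X Y : V × V) :
    ‖P X - P Y‖ ≤ μ * A 1 * ‖X - Y‖ := by
  refine convex_univ.norm_image_sub_le_of_norm_fderiv_le (𝕜 := ℝ) (fun x _ => h.smooth.differentiable (by simp) x)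
    (fun x _ => ?_) (Set.mem_univ _) (Set.mem_univ _)
  have := h.bound 1 le_rfl x
  rwa [← norm_iteratedFDeriv_fderiv (n := 0), norm_iteratedFDeriv_zero] at this

/-- local lower bound -/
lemma local_lemma {φ : V → ℝ} (hφ : ContDiff ℝ ∞ φ) (hc : HasCompactSupport φ) (L : List V) (A : ℕ → ℝ) :
    ∃ C : ℝ, 0 ≤ C ∧ ∀ (P : V × V → ℝ) (μ : ℝ), 0 ≤ μ → Good A μ (fun X => (P X : ℂ)) → (∀ X, 0 ≤ P X) →
      ∀ v : 𝓢(V, ℂ), -(C * μ * ∫ θ, ‖v θ‖ ^ 2 / ‖lamL L θ‖ ^ 2) ≤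
        (BF (fun x θ => (P (x, θ) : ℂ) * ((φ θ ^ 2 : ℝ) : ℂ)) v ⇑(𝓕⁻ v : 𝓢(V, ℂ))).re := by
  set ψ : V → ℂ := fun θ => (φ θ : ℂ) * lamC L θ with hψd
  have hφC : ContDiff ℝ ∞ (fun θ => (φ θ : ℂ)) := Complex.ofRealCLM.contDiff.comp hφ
  have hφc : HasCompactSupport (fun θ => (φ θ : ℂ)) := hc.comp_left (g := fun t : ℝ => (t : ℂ)) (by simp)
  have hlC : ContDiff ℝ ∞ (lamC L) := (Complex.conjCLE : ℂ →L[ℝ] ℂ).contDiff.comp (contDiff_lamL L)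
  have hψ : ContDiff ℝ ∞ ψ := hφC.mul hlC
  have hψc : HasCompactSupport ψ := hφc.mul_right
  set Φ1 : V → ℂ := fun θ => lamC L θ * ((φ θ : ℂ) * (φ θ : ℂ)) with hΦ1
  have hΦ1s : ContDiff ℝ ∞ Φ1 := hlC.mul (hφC.mul hφC)
  have hΦ1c : HasCompactSupport Φ1 := (hφc.mul_left).mul_left
  set Φ2 : V → ℂ := fun θ => conj (ψ θ) * ψ θ with hΦ2
  have hΦ2s : ContDiff ℝ ∞ Φ2 := ((Complex.conjCLE : ℂ →L[ℝ] ℂ).contDiff.comp hψ).mul hψ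
  have hΦ2c : HasCompactSupport Φ2 := hψc.mul_left
  obtain ⟨R, hR⟩ : ∃ R, ∀ θ ∈ tsupport Φ2, ‖θ‖ ≤ R := hΦ2c.isBounded.exists_norm_le
  obtain ⟨C1, h1, H1⟩ := ibp_list L hΦ1s hΦ1c A
  obtain ⟨C2, h2, H2⟩ := KL hΦ2s hΦ2c (fun k => if k = 0 then A 1 * R else A k)
  obtain ⟨C3, h3, H3⟩ := commutator hψ hψc
  refine ⟨2 * C1 + 2 * C2 + C3 * |A 1|, by positivity, fun P μ hμ hP hP0 v => ?_⟩
  obtain ⟨v', hv'⟩ := lamL_div L v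
  set w : 𝓢(V, ℂ) := 𝓕⁻ v' with hw
  have hFw : 𝓕 w = v' := FourierTransform.fourier_fourierInv_eq _
  have hvw : 𝓕 (opL L w) = v := by
    ext θ; rw [fourier_opL, hFw, hv']
  have hop : (𝓕⁻ v : 𝓢(V, ℂ)) = opL L w := by
    rw [← hvw]; exact FourierTransform.fourierInv_fourier_eq _
  have hnorm : ∫ θ, ‖v θ‖ ^ 2 / ‖lamL L θ‖ ^ 2 = ∫ x, ‖w x‖ ^ 2 := by
    rw [← SchwartzMap.integral_norm_sq_fourier w, hFw]
    congr 1; ext θ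
    have : ‖lamL L θ‖ ≠ 0 := norm_ne_zero_iff.2 (lamL_ne L θ)
    rw [hv', lamC, norm_mul, RCLike.norm_conj]
    field_simp
  rw [hnorm, hop]
  set W := ∫ x, ‖w x‖ ^ 2 with hW
  have hW0 : 0 ≤ W := integral_nonneg fun x => by positivity
  have e0 : BF (fun x θ => (P (x, θ) : ℂ) * ((φ θ ^ 2 : ℝ) : ℂ)) v ⇑(opL L w) =
      BF (fun x θ => (P (x, θ) : ℂ) * Φ1 θ) ⇑(𝓕 w : 𝓢(V, ℂ)) ⇑(opL L w) := by
    unfold BF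
    congr 1; ext x; congr 2; ext θ
    rw [hv', hFw]; simp only [hΦ1]; push_cast; ring
  have a1 := H1 _ μ hμ hP w w
  have e1 : (fun x θ => (P (x, θ) : ℂ) * (lamL L θ * Φ1 θ)) = fun x θ => (P (x, θ) : ℂ) * Φ2 θ := by
    ext x θ; simp only [hΦ1, hΦ2, hψd, lamC, map_mul, Complex.conj_conj, Complex.conj_ofReal]; ring
  rw [e1] at a1
  have hPs : Continuous (fun X => (P X : ℂ)) := hP.smooth.continuous
  have hp0 : Continuous (fun x => (P (x, 0) : ℂ)) := hPs.comp (by fun_prop : Continuous fun x : V => (x, (0:V)))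
  have a2 := H2 (fun x θ => (P (x, θ) : ℂ) - (P (x, 0) : ℂ)) μ hμ
    (fun x => (contDiff_slice hP.smooth x).sub contDiff_const) (fun x θ hθ k => by
      rcases Nat.eq_zero_or_pos k with rfl | hk
      · simp only [norm_iteratedFDeriv_zero, if_true]
        have h5 := hP.lip (x, θ) (x, 0)
        have h6 : ‖((x, θ) : V × V) - (x, 0)‖ = ‖θ‖ := by simp [Prod.norm_def]
        rw [h6] at h5
        have h7 : 0 ≤ μ * A 1 := (norm_nonneg _).trans (hP.bound 1 le_rfl 0)
        calc _ ≤ μ * A 1 * ‖θ‖ := h5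
          _ ≤ μ * A 1 * R := by gcongr; exact hR θ hθ
          _ = _ := by ring
      · rw [if_neg hk.ne']
        have h5 := (norm_slice_le hP.smooth x θ k).trans (hP.bound k hk _)
        obtain ⟨k, rfl⟩ : ∃ j, k = j + 1 := ⟨k - 1, by omega⟩
        rw [← norm_iteratedFDeriv_fderiv] at h5 ⊢
        have h6 : fderiv ℝ (fun θ => (P (x, θ) : ℂ) - (P (x, 0) : ℂ)) = fderiv ℝ (fun θ => (P (x, θ) : ℂ)) := by
          ext1 θ; rw [fderiv_sub_const]
        rw [h6]
        exact h5) w w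
  obtain ⟨g, a3⟩ := H3 (fun x => (P (x, 0) : ℂ)) (μ * |A 1|) (by positivity) hp0
    (by obtain ⟨D, hD⟩ := hP.bdd; exact ⟨D, fun x => hD _⟩) (fun x y => by
      have h5 := hP.lip (x, 0) (y, 0)
      have h6 : ‖((x, 0) : V × V) - (y, 0)‖ = ‖x - y‖ := by simp [Prod.norm_def]
      rw [h6] at h5
      refine h5.trans ?_
      gcongr
      exact le_abs_self _) w
  obtain ⟨c4, C4, h4⟩ := bdd_mul hPs hP.bdd hΦ2s.continuous hΦ2c
  have hsplit : BF (fun x θ => (P (x, θ) : ℂ) * Φ2 θ) ⇑(𝓕 w : 𝓢(V, ℂ)) w =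
      BF (fun x θ => ((P (x, θ) : ℂ) - (P (x, 0) : ℂ)) * Φ2 θ) ⇑(𝓕 w : 𝓢(V, ℂ)) w +
      BF (fun x θ => (P (x, 0) : ℂ) * Φ2 θ) ⇑(𝓕 w : 𝓢(V, ℂ)) w := by
    obtain ⟨D, hD⟩ := hP.bdd
    obtain ⟨c5, C5, h5⟩ := bdd_mul (P := fun X : V × V => (P (X.1, 0) : ℂ)) (hp0.comp continuous_fst) ⟨D, fun X => hD _⟩ hΦ2s.continuous hΦ2c
    obtain ⟨c6, C6, h6⟩ := bdd_mul (P := fun X : V × V => (P X : ℂ) - (P (X.1, 0) : ℂ)) (hPs.sub (hp0.comp continuous_fst))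
      ⟨D + D, fun X => (norm_sub_le _ _).trans (add_le_add (hD _) (hD _))⟩ hΦ2s.continuous hΦ2c
    rw [← BF_add c6 h6 c5 h5]
    congr 1; ext x θ; ring
  have hpos : 0 ≤ (∫ y, (P (y, 0) : ℂ) * (‖g y‖ ^ 2 : ℝ)).re := by
    have : (∫ y, (P (y, 0) : ℂ) * (‖g y‖ ^ 2 : ℝ)) = ((∫ y, P (y, 0) * ‖g y‖ ^ 2 : ℝ) : ℂ) := by
      rw [← integral_complex_ofReal]; congr 1; ext y; push_cast; rfl
    rw [this, Complex.ofReal_re]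
    exact integral_nonneg fun y => mul_nonneg (hP0 _) (by positivity)
  rw [e0]
  set b0 := BF (fun x θ => (P (x, θ) : ℂ) * Φ1 θ) ⇑(𝓕 w : 𝓢(V, ℂ)) ⇑(opL L w)
  set b1 := BF (fun x θ => (P (x, θ) : ℂ) * Φ2 θ) ⇑(𝓕 w : 𝓢(V, ℂ)) w
  set b2 := BF (fun x θ => ((P (x, θ) : ℂ) - (P (x, 0) : ℂ)) * Φ2 θ) ⇑(𝓕 w : 𝓢(V, ℂ)) w
  set b3 := BF (fun x θ => (P (x, 0) : ℂ) * Φ2 θ) ⇑(𝓕 w : 𝓢(V, ℂ)) w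
  set b4 := ∫ y, (P (y, 0) : ℂ) * (‖g y‖ ^ 2 : ℝ)
  have r1 := (abs_le.1 ((Complex.abs_re_le_norm _).trans a1)).1
  have r2 := (abs_le.1 ((Complex.abs_re_le_norm _).trans a2)).1
  have r3 := (abs_le.1 ((Complex.abs_re_le_norm _).trans a3)).1
  rw [Complex.sub_re] at r1 r3
  have r4 : b1.re = b2.re + b3.re := by rw [hsplit, Complex.add_re]
  nlinarith

end GE

open MeasureTheory Complex

namespace GE
open MeasureTheory SchwartzMap FourierTransform Complex
open scoped LineDeriv ContDiff ComplexConjugate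

set_option linter.unusedSectionVars false
set_option linter.unusedVariables false
set_option linter.deprecated false
variable {V : Type*} [NormedAddCommGroup V] [InnerProductSpace ℝ V] [FiniteDimensional ℝ V]
  [MeasurableSpace V] [BorelSpace V]

lemma lamL_append (L M : List V) (θ : V) : lamL (L ++ M) θ = lamL L θ * lamL M θ := by
  induction L with
  | nil => simp [lamL]
  | cons d L ih => simp [lamL, ih, mul_assoc]

lemma norm_lam_sq (d θ : V) : 1 + (inner ℝ d θ : ℝ) ^ 2 ≤ ‖lam d θ‖ ^ 2 := by
  have : ‖lam d θ‖ ^ 2 = 1 + 4 * Real.pi ^ 2 * (inner ℝ d θ : ℝ) ^ 2 := by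
    rw [← Complex.normSq_eq_norm_sq]
    simp [lam, Complex.normSq_apply]; ring
  rw [this]
  have : 1 ≤ 4 * Real.pi ^ 2 := by nlinarith [Real.pi_gt_three]
  nlinarith [sq_nonneg (inner ℝ d θ : ℝ)]

lemma lamL_sum (L : List V) (θ : V) : 1 + (L.map fun d => (inner ℝ d θ : ℝ) ^ 2).sum ≤ ‖lamL L θ‖ ^ 2 := by
  induction L with
  | nil => simp [lamL]
  | cons d L ih =>
    simp only [List.map_cons, List.sum_cons, lamL, norm_mul, mul_pow]
    have h1 := norm_lam_sq d θ
    have h2 : 0 ≤ (L.map fun d => (inner ℝ d θ : ℝ) ^ 2).sum :=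
      List.sum_nonneg (by simp only [List.mem_map]; rintro _ ⟨d, _, rfl⟩; positivity)
    nlinarith [sq_nonneg (inner ℝ d θ : ℝ), mul_nonneg (sq_nonneg (inner ℝ d θ : ℝ)) h2]

lemma exists_lamL (N : ℕ) : ∃ L : List V, ∀ θ, (1 + ‖θ‖ ^ 2) ^ N ≤ ‖lamL L θ‖ ^ 2 := by
  induction N with
  | zero => exact ⟨[], fun θ => by simp [lamL]⟩
  | succ N ih =>
    obtain ⟨L, hL⟩ := ih
    set b := stdOrthonormalBasis ℝ V
    refine ⟨L ++ (List.ofFn b), fun θ => ?_⟩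
    rw [lamL_append, norm_mul, mul_pow, pow_succ]
    have h1 := lamL_sum (List.ofFn b) θ
    have h2 : ((List.ofFn b).map fun d => (inner ℝ d θ : ℝ) ^ 2).sum = ‖θ‖ ^ 2 := by
      rw [List.map_ofFn, List.sum_ofFn]
      have := b.sum_sq_norm_inner_right θ
      simpa using this
    rw [h2] at h1
    have := hL θ
    gcongr

/-- rescaled Schwartz function -/
lemma exists_rescale (u : 𝓢(V, ℂ)) (z : V) {R : ℝ} (hR : 0 < R) :
    ∃ v : 𝓢(V, ℂ), ∀ θ, v θ = u (z + R • θ) := by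
  set T : V ≃L[ℝ] V := ContinuousLinearEquiv.smulLeft (Units.mk0 R hR.ne')
  refine ⟨SchwartzMap.compCLMOfContinuousLinearEquiv ℝ T (SchwartzMap.compSubConstCLM ℝ (-z) u), fun θ => ?_⟩
  have : T θ = R • θ := rfl
  simp [this, add_comm]

lemma BF_scale (a : V → V → ℂ) (f v : 𝓢(V, ℂ)) (z : V) {R : ℝ} (hR : 0 < R)
    (hv : ∀ θ, v θ = 𝓕 f (z + R • θ)) :
    BF a ⇑(𝓕 f : 𝓢(V, ℂ)) f = (R ^ (Module.finrank ℝ V) : ℝ) *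
      BF (fun y θ => a (R⁻¹ • y) (z + R • θ)) v ⇑(𝓕⁻ v : 𝓢(V, ℂ)) := by
  set n := Module.finrank ℝ V
  have hRn : (R ^ n : ℝ) ≠ 0 := by positivity
  have cv : ∀ G : V → ℂ, ∫ θ, G (z + R • θ) = ((R ^ n)⁻¹ : ℝ) * ∫ ζ, G ζ := by
    intro G
    rw [Measure.integral_comp_smul volume (fun u => G (z + u)) R, integral_add_left_eq_self]
    rw [abs_of_pos (by positivity)]; simp [n]
  have cx : ∀ G : V → ℂ, ∫ y, G (R⁻¹ • y) = (R ^ n : ℝ) * ∫ ζ, G ζ := by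
    intro G
    rw [Measure.integral_comp_smul volume G R⁻¹]
    rw [abs_of_pos (by positivity)]; simp [n]
  have hf : ∀ y, (𝓕⁻ v : 𝓢(V, ℂ)) y = ((R ^ n)⁻¹ : ℝ) * (expi (-(inner ℝ z (R⁻¹ • y))) * f (R⁻¹ • y)) := by
    intro y
    rw [SchwartzMap.fourierInv_coe, fourierInv_expi]
    have e : f = (𝓕⁻ (𝓕 f) : 𝓢(V, ℂ)) := (FourierTransform.fourierInv_fourier_eq f).symm
    have e2 : f (R⁻¹ • y) = ∫ ζ, expi (inner ℝ ζ (R⁻¹ • y)) * 𝓕 f ζ := by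
      conv_lhs => rw [e]
      rw [SchwartzMap.fourierInv_coe, fourierInv_expi]
    rw [e2, ← integral_const_mul, ← cv]
    congr 1; ext θ
    rw [hv, ← mul_assoc, ← expi_add]
    congr 2
    rw [inner_add_left, real_inner_smul_left, real_inner_smul_right, real_inner_smul_right]
    field_simp; ring
  have hin : ∀ y, ∫ θ, expi (inner ℝ y θ) * a (R⁻¹ • y) (z + R • θ) * v θ =
      ((R ^ n)⁻¹ : ℝ) * (expi (-(inner ℝ z (R⁻¹ • y))) * ∫ ζ, expi (inner ℝ (R⁻¹ • y) ζ) * a (R⁻¹ • y) ζ * 𝓕 f ζ) := by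
    intro y
    rw [← integral_const_mul, ← cv]
    congr 1; ext θ
    rw [hv, ← mul_assoc, ← mul_assoc, ← expi_add]
    congr 3
    rw [inner_add_right, real_inner_smul_left, real_inner_smul_right, real_inner_smul_left, real_inner_smul_right, real_inner_comm y z]
    field_simp; ring
  unfold BF
  simp only [hin, hf]
  have : ∀ y : V, ((R ^ n)⁻¹ : ℝ) * (expi (-(inner ℝ z (R⁻¹ • y))) *
      ∫ ζ, expi (inner ℝ (R⁻¹ • y) ζ) * a (R⁻¹ • y) ζ * 𝓕 f ζ) *
      conj (((R ^ n)⁻¹ : ℝ) * (expi (-(inner ℝ z (R⁻¹ • y))) * f (R⁻¹ • y))) =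
      (fun x => ((R ^ n)⁻¹ : ℝ) * ((R ^ n)⁻¹ : ℝ) * ((∫ ζ, expi (inner ℝ x ζ) * a x ζ * 𝓕 f ζ) * conj (f x))) (R⁻¹ • y) := by
    intro y
    simp only [map_mul, Complex.conj_ofReal, conj_expi, neg_neg]
    have h1 : expi (-(inner ℝ z (R⁻¹ • y))) * expi (inner ℝ z (R⁻¹ • y)) = 1 := by
      rw [← expi_add, neg_add_cancel, expi_zero]
    linear_combination (((R ^ n)⁻¹ : ℝ) * ((R ^ n)⁻¹ : ℝ) *
      ((∫ ζ, expi (inner ℝ (R⁻¹ • y) ζ) * a (R⁻¹ • y) ζ * 𝓕 f ζ) * conj (f (R⁻¹ • y)))) * h1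
  rw [integral_congr_ae (Filter.Eventually.of_forall this), cx (fun x => ((R ^ n)⁻¹ : ℝ) * ((R ^ n)⁻¹ : ℝ) *
    ((∫ ζ, expi (inner ℝ x ζ) * a x ζ * 𝓕 f ζ) * conj (f x))), integral_const_mul, Complex.ofReal_inv]
  have hRc : ((R ^ n : ℝ) : ℂ) ≠ 0 := by exact_mod_cast hRn
  field_simp

/-- averaging over translates -/
lemma BF_average {a : V → V → ℂ} (ha : Continuous fun X : V × V => a X.1 X.2)
    {C : ℝ} (hC : ∀ x θ, ‖a x θ‖ ≤ C) (v w : 𝓢(V, ℂ)) {h : V → ℝ} (hh : Continuous h)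
    (hhc : HasCompactSupport h) (h1 : ∫ θ, h θ = 1) {R : ℝ} (hR : 0 < R) :
    Integrable (fun z => BF (fun x ζ => a x ζ * (h (R⁻¹ • (ζ - z)) : ℂ)) v w) ∧
    ∫ z, BF (fun x ζ => a x ζ * (h (R⁻¹ • (ζ - z)) : ℂ)) v w = (R ^ (Module.finrank ℝ V) : ℝ) * BF a v w := by
  set n := Module.finrank ℝ V
  obtain ⟨D, hD⟩ := hhc.exists_bound_of_continuous hh
  set G : V × V → ℂ := fun X => expi (inner ℝ X.1 X.2) * a X.1 X.2 * v X.2 * conj (w X.1) with hG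
  have hGi : Integrable G (volume.prod volume) := integrable_BF ha hC v w
  have hi : Integrable h := hh.integrable_of_hasCompactSupport hhc
  have hiR : ∀ ζ, Integrable (fun z => h (R⁻¹ • (ζ - z))) := fun ζ =>
    (hi.comp_smul (inv_ne_zero hR.ne')).comp_sub_left ζ
  have heq : ∀ k : V → ℝ, ∀ ζ, ∫ z, k (R⁻¹ • (ζ - z)) = R ^ n * ∫ θ, k θ := by
    intro k ζ
    rw [integral_sub_left_eq_self (fun u => k (R⁻¹ • u)) volume ζ, Measure.integral_comp_smul]
    rw [abs_of_pos (by positivity)]; simp [n]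
  have hcont : Continuous G := by
    have := v.continuous
    have := w.continuous
    have := continuous_expi
    fun_prop
  have hint : Integrable (fun p : V × (V × V) => G p.2 * (h (R⁻¹ • (p.2.2 - p.1)) : ℂ))
      (volume.prod (volume.prod volume)) := by
    rw [integrable_prod_iff' (by apply Continuous.aestronglyMeasurable; fun_prop)]
    constructor
    · exact Filter.Eventually.of_forall fun X => ((hiR X.2).ofReal).const_mul (G X)
    · simp only [norm_mul, Complex.norm_real]
      have : ∀ X : V × V, ∫ z, ‖G X‖ * ‖h (R⁻¹ • (X.2 - z))‖ = ‖G X‖ * (R ^ n * ∫ θ, ‖h θ‖) := by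
        intro X
        rw [integral_const_mul, heq (fun u => ‖h u‖)]
      simp only [this]
      exact hGi.norm.mul_const _
  have hpt : ∀ z, BF (fun x ζ => a x ζ * (h (R⁻¹ • (ζ - z)) : ℂ)) v w =
      ∫ X : V × V, G X * (h (R⁻¹ • (X.2 - z)) : ℂ) ∂(volume.prod volume) := by
    intro z
    rw [BF_prod (C := C * D) (by fun_prop) (fun x θ => ?_)]
    · congr 1; ext X; simp only [hG]; ring
    · rw [norm_mul, Complex.norm_real]
      exact mul_le_mul (hC _ _) (hD _) (norm_nonneg _) ((norm_nonneg _).trans (hC x θ))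
  simp only [hpt]
  refine ⟨hint.integral_prod_left, ?_⟩
  rw [integral_integral_swap hint, BF_prod ha hC, ← integral_const_mul]
  congr 1; ext X
  rw [integral_const_mul, integral_complex_ofReal, heq, h1, mul_one, mul_comm]

end GE

open MeasureTheory Complex

namespace GE
open MeasureTheory SchwartzMap FourierTransform Complex
open scoped LineDeriv ContDiff ComplexConjugate

set_option linter.unusedSectionVars false
set_option linter.unusedVariables false
set_option linter.deprecated false
variable {V : Type*} [NormedAddCommGroup V] [InnerProductSpace ℝ V] [FiniteDimensional ℝ V]
  [MeasurableSpace V] [BorelSpace V]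

/-- the bump -/
noncomputable def bmp (V : Type*) [NormedAddCommGroup V] [InnerProductSpace ℝ V] [FiniteDimensional ℝ V] :
    ContDiffBump (0 : V) := ⟨1, 2, by norm_num, by norm_num⟩

/-- the cutoff -/
noncomputable def chi (u : V) : ℝ := bmp V u

lemma chi_smooth : ContDiff ℝ ∞ (chi : V → ℝ) := (bmp V).contDiff
lemma chi_nonneg (u : V) : 0 ≤ chi u := (bmp V).nonneg
lemma chi_le_one (u : V) : chi u ≤ 1 := (bmp V).le_one
lemma chi_one {u : V} (h : ‖u‖ ≤ 1) : chi u = 1 :=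
  (bmp V).one_of_mem_closedBall (by simpa [bmp] using h)
lemma chi_zero {u : V} (h : 2 ≤ ‖u‖) : chi u = 0 :=
  (bmp V).zero_of_le_dist (by simpa [bmp] using h)

/-- dyadic profile -/
noncomputable def om : ℕ → V → ℝ
  | 0, u => chi u
  | _ + 1, u => chi u - chi ((2 : ℝ) • u)

lemma om_smooth (j : ℕ) : ContDiff ℝ ∞ (om j : V → ℝ) := by
  cases j with
  | zero => exact chi_smooth
  | succ j => exact chi_smooth.sub (chi_smooth.comp (contDiff_const_smul (2:ℝ)))

lemma om_nonneg (j : ℕ) (u : V) : 0 ≤ om j u := by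
  cases j with
  | zero => exact chi_nonneg u
  | succ j =>
    simp only [om]
    rcases le_total ‖u‖ 1 with h | h
    · rw [chi_one h]; linarith [chi_le_one ((2:ℝ) • u)]
    · rw [chi_zero (u := (2:ℝ) • u) (by rw [norm_smul]; norm_num; linarith)]
      linarith [chi_nonneg u]

lemma om_le_one (j : ℕ) (u : V) : om j u ≤ 1 := by
  cases j with
  | zero => exact chi_le_one u
  | succ j => simp only [om]; linarith [chi_le_one u, chi_nonneg ((2:ℝ) • u)]

lemma om_zero_of_large (j : ℕ) {u : V} (h : 2 ≤ ‖u‖) : om j u = 0 := by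
  cases j with
  | zero => exact chi_zero h
  | succ j => simp only [om]; rw [chi_zero h, chi_zero (by rw [norm_smul]; norm_num; linarith), sub_zero]

lemma om_zero_of_small (j : ℕ) {u : V} (h : ‖u‖ ≤ 1 / 2) : om (j + 1) u = 0 := by
  simp only [om]; rw [chi_one (by linarith), chi_one (by rw [norm_smul]; norm_num; linarith), sub_self]

/-- dyadic cutoff -/
noncomputable def chij (j : ℕ) (ζ : V) : ℝ := om j (((2 : ℝ) ^ j)⁻¹ • ζ)

lemma chij_cont (j : ℕ) : Continuous (chij j : V → ℝ) :=
  (om_smooth j).continuous.comp (by fun_prop)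

lemma chij_sum (J : ℕ) (ζ : V) : ∑ j ∈ Finset.range (J + 1), chij j ζ = chi (((2 : ℝ) ^ J)⁻¹ • ζ) := by
  induction J with
  | zero => simp [chij, om]
  | succ J ih =>
    rw [Finset.sum_range_succ, ih]
    simp only [chij, om, smul_smul]
    have : (2:ℝ) * (2 ^ (J + 1))⁻¹ = (2 ^ J)⁻¹ := by rw [pow_succ]; field_simp
    rw [this]; ring

lemma chij_supp {j : ℕ} {ζ : V} (h : chij j ζ ≠ 0) :
    ‖ζ‖ ≤ 2 * 2 ^ j ∧ (j = 0 ∨ 2 ^ j / 2 ≤ ‖ζ‖) := by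
  have hp : (0:ℝ) < 2 ^ j := by positivity
  have hn : ‖((2 : ℝ) ^ j)⁻¹ • ζ‖ = ‖ζ‖ / 2 ^ j := by
    rw [norm_smul, norm_inv, norm_pow, Real.norm_ofNat]; field_simp
  constructor
  · by_contra hc
    refine h (om_zero_of_large j ?_)
    rw [hn, le_div_iff₀ hp]; linarith
  · rcases j with _ | j
    · exact Or.inl rfl
    · right
      by_contra hc
      refine h (om_zero_of_small j ?_)
      rw [hn, div_le_iff₀ hp]; linarith

/-- weight comparison -/
lemma weight_cmp {κ : ℝ} (h0 : 0 < κ) (h1 : κ < 1) {T : ℝ} (hT : 1 ≤ T) {z ζ : V} (hz : ‖z‖ ≤ 3 * T)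
    (hz' : T = 1 ∨ T / 4 ≤ ‖z‖) (s : ℝ) :
    T ^ s ≤ (8 * (1 + ‖(T ^ κ)⁻¹ • (ζ - z)‖ ^ 2)) ^ ((1 / (1 - κ)) * |s|) * (1 + ‖ζ‖ ^ 2) ^ (s / 2) := by
  set p := 1 / (1 - κ) with hp
  have hp1 : 1 ≤ p := by rw [hp, le_div_iff₀ (by linarith)]; linarith
  have hRpos : 0 < T ^ κ := by positivity
  have hRT : T ^ κ ≤ T := by
    conv_rhs => rw [← Real.rpow_one T]
    exact Real.rpow_le_rpow_of_exponent_le hT h1.le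
  set r := ‖(T ^ κ)⁻¹ • (ζ - z)‖ with hr
  have hr0 : 0 ≤ r := norm_nonneg _
  have hdist : ‖ζ - z‖ = T ^ κ * r := by
    rw [hr, norm_smul, norm_inv, Real.norm_of_nonneg hRpos.le]; field_simp
  set Q := 1 + r ^ 2 with hQ
  have hQ1 : 1 ≤ Q := by rw [hQ]; nlinarith
  have hrQ : r ≤ Q := by rw [hQ]; nlinarith [sq_nonneg (r - 1)]
  set B := (1 + ‖ζ‖ ^ 2) ^ (1 / 2 : ℝ) with hB
  have hBs : (1 + ‖ζ‖ ^ 2) ^ (s / 2) = B ^ s := by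
    rw [hB, ← Real.rpow_mul (by positivity)]; congr 1; ring
  have hB1 : 1 ≤ B := Real.one_le_rpow (by nlinarith [sq_nonneg ‖ζ‖]) (by norm_num)
  have hBsq : B = Real.sqrt (1 + ‖ζ‖ ^ 2) := by rw [hB, Real.sqrt_eq_rpow]
  have hBu : B ≤ 1 + ‖ζ‖ := by
    rw [hBsq]; apply Real.sqrt_le_iff.2; constructor
    · positivity
    · nlinarith [norm_nonneg ζ]
  have hBl : ‖ζ‖ ≤ B := by
    rw [hBsq]; apply Real.le_sqrt_of_sq_le; linarith
  have h8Q : 8 * Q ≤ (8 * Q) ^ p := by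
    conv_lhs => rw [← Real.rpow_one (8 * Q)]
    exact Real.rpow_le_rpow_of_exponent_le (by linarith) hp1
  have c1 : B ≤ (8 * Q) ^ p * T := by
    have : ‖ζ‖ ≤ ‖z‖ + ‖ζ - z‖ := by
      have := norm_add_le z (ζ - z); simpa using this
    have h3 : T ^ κ * r ≤ T * r := by gcongr
    calc B ≤ 1 + (3 * T + T * r) := by linarith
      _ ≤ 8 * Q * T := by nlinarith
      _ ≤ _ := by gcongr
  have c2 : T ≤ (8 * Q) ^ p * B := by
    rcases hz' with h | h
    · rw [h]; nlinarith [h8Q]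
    · rcases le_total (T / 8) ‖ζ‖ with h3 | h3
      · calc T ≤ 8 * B := by linarith
          _ ≤ 8 * Q * B := by nlinarith
          _ ≤ _ := by gcongr
      · have h4 : T / 8 ≤ T ^ κ * r := by
          have : ‖z‖ ≤ ‖ζ‖ + ‖ζ - z‖ := by
            have := norm_sub_le ζ (ζ - z); simpa using this
          linarith
        have h5 : T ^ (1 - κ) ≤ 8 * Q := by
          rw [Real.rpow_sub (by linarith), Real.rpow_one, div_le_iff₀ hRpos]
          nlinarith
        have h6 : T ≤ (8 * Q) ^ p := by
          calc T = (T ^ (1 - κ)) ^ p := by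
                rw [← Real.rpow_mul (by linarith), hp, mul_one_div_cancel (by linarith), Real.rpow_one]
            _ ≤ _ := by gcongr
        nlinarith [h8Q]
  have hX : 0 < (8 * Q) ^ p := by positivity
  rw [hBs, Real.rpow_mul (by positivity)]
  rcases le_total 0 s with hs | hs
  · rw [abs_of_nonneg hs, ← Real.mul_rpow hX.le (by linarith)]
    exact Real.rpow_le_rpow (by linarith) c2 hs
  · rw [abs_of_nonpos hs]
    have h7 : B ^ (-s) ≤ ((8 * Q) ^ p) ^ (-s) * T ^ (-s) := by
      rw [← Real.mul_rpow hX.le (by linarith)]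
      exact Real.rpow_le_rpow (by linarith) c1 (by linarith)
    have hTs : T ^ s = (T ^ (-s))⁻¹ := by rw [← Real.rpow_neg (by linarith), neg_neg]
    have hBs' : B ^ s = (B ^ (-s))⁻¹ := by rw [← Real.rpow_neg (by linarith), neg_neg]
    have p1 : 0 < T ^ (-s) := by positivity
    have p2 : 0 < B ^ (-s) := by positivity
    rw [hTs, hBs', ← div_eq_mul_inv, le_div_iff₀ p2, inv_mul_le_iff₀ p1, mul_comm]
    exact h7

lemma weight_cmp2 {κ : ℝ} (h0 : 0 < κ) (h1 : κ < 1) (s : ℝ) (K : ℕ) : ∃ N : ℕ, ∃ C : ℝ, 0 ≤ C ∧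
    ∀ {T : ℝ} (hT : 1 ≤ T) {z ζ : V} (hz : ‖z‖ ≤ 3 * T) (hz' : T = 1 ∨ T / 4 ≤ ‖z‖),
    T ^ s / (1 + ‖(T ^ κ)⁻¹ • (ζ - z)‖ ^ 2) ^ N ≤
      C * ((1 + ‖ζ‖ ^ 2) ^ (s / 2) * (1 + ‖(T ^ κ)⁻¹ • (ζ - z)‖ ^ 2) ^ (-(K : ℝ))) := by
  set e := (1 / (1 - κ)) * |s| with he
  have he0 : 0 ≤ e := by
    have : 0 < 1 - κ := by linarith
    positivity
  refine ⟨⌈e⌉₊ + K, 8 ^ e, by positivity, fun {T} hT {z ζ} hz hz' => ?_⟩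
  have h := weight_cmp h0 h1 hT (ζ := ζ) hz hz' s
  set Q := 1 + ‖(T ^ κ)⁻¹ • (ζ - z)‖ ^ 2 with hQ
  have hQ1 : 1 ≤ Q := by rw [hQ]; nlinarith [sq_nonneg ‖(T ^ κ)⁻¹ • (ζ - z)‖]
  rw [← he, Real.mul_rpow (by norm_num) (by linarith)] at h
  rw [div_le_iff₀ (by positivity), Real.rpow_neg (by linarith), Real.rpow_natCast]
  have h2 : Q ^ e ≤ Q ^ ⌈e⌉₊ := by
    rw [← Real.rpow_natCast]
    exact Real.rpow_le_rpow_of_exponent_le hQ1 (Nat.le_ceil e)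
  have hQK : Q ^ K ≠ 0 := by positivity
  calc T ^ s ≤ _ := h
    _ ≤ 8 ^ e * Q ^ ⌈e⌉₊ * (1 + ‖ζ‖ ^ 2) ^ (s / 2) := by gcongr
    _ = _ := by rw [pow_add]; field_simp

end GE

open MeasureTheory Complex

namespace GE
open MeasureTheory SchwartzMap FourierTransform Complex
open scoped LineDeriv ContDiff ComplexConjugate

set_option linter.unusedSectionVars false
set_option linter.unusedVariables false
set_option linter.deprecated false
variable {V : Type*} [NormedAddCommGroup V] [InnerProductSpace ℝ V] [FiniteDimensional ℝ V]
  [MeasurableSpace V] [BorelSpace V]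

lemma exists_phi : ∃ φ : V → ℝ, ContDiff ℝ ∞ φ ∧ HasCompactSupport φ ∧ (∀ θ, φ θ ≠ 0 → ‖θ‖ ≤ 1 / 4) ∧
    ∫ θ, φ θ ^ 2 = 1 := by
  let b : ContDiffBump (0 : V) := ⟨1/8, 1/4, by norm_num, by norm_num⟩
  have hbI : Integrable (fun θ => b θ ^ 2) := by
    apply Continuous.integrable_of_hasCompactSupport (b.continuous.pow 2)
    have := b.hasCompactSupport.mul_right (f' := b)
    simpa [sq] using this
  have hpos : 0 < ∫ θ, b θ ^ 2 := by
    rw [integral_pos_iff_support_of_nonneg (fun θ => by positivity) hbI]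
    have : Function.support (fun θ => b θ ^ 2) = Metric.ball 0 (1/4) := by
      have hb : Function.support b = Metric.ball 0 (1/4) := b.support_eq
      rw [← hb]; ext θ; simp
    rw [this]; exact Metric.measure_ball_pos _ _ (by norm_num)
  set I0 := ∫ θ, b θ ^ 2 with hI0
  refine ⟨fun θ => (Real.sqrt I0)⁻¹ * b θ, contDiff_const.mul b.contDiff, b.hasCompactSupport.mul_left, ?_, ?_⟩
  · intro θ h
    have : b θ ≠ 0 := right_ne_zero_of_mul h
    by_contra hc
    exact this (b.zero_of_le_dist (by simpa [b] using (not_le.1 hc).le))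
  · simp_rw [mul_pow]
    rw [integral_const_mul, inv_pow, Real.sq_sqrt hpos.le, ← hI0, inv_mul_cancel₀ hpos.ne']

lemma BF_const_mul (c : ℂ) (a : V → V → ℂ) (v w : V → ℂ) :
    BF (fun x θ => c * a x θ) v w = c * BF a v w := by
  unfold BF
  rw [← integral_const_mul]
  congr 1; ext x
  rw [← mul_assoc, ← integral_const_mul]
  congr 2; ext θ; ring

lemma div_weight_integrable (g : 𝓢(V, ℂ)) (N : ℕ) (z : V) (r : ℝ) :
    Integrable fun ζ => ‖g ζ‖ ^ 2 / (1 + ‖r • (ζ - z)‖ ^ 2) ^ N := by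
  refine (schwartz_sq g).mono' (Continuous.aestronglyMeasurable ?_) (ae_of_all _ fun ζ => ?_)
  · refine Continuous.div (by fun_prop) (by fun_prop) fun ζ => by positivity
  · rw [Real.norm_of_nonneg (by positivity)]
    apply div_le_self (by positivity)
    exact one_le_pow₀ (by nlinarith [sq_nonneg ‖r • (ζ - z)‖])

lemma piece {φ : V → ℝ} (hφ : ContDiff ℝ ∞ φ) (hc : HasCompactSupport φ) (A : ℕ → ℝ) (N : ℕ) :
    ∃ C : ℝ, 0 ≤ C ∧ ∀ (a : V × V → ℝ) (R c μ : ℝ) (z : V), 0 < R → 0 < c → 0 ≤ μ → (∀ X, 0 ≤ a X) →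
      Good A μ (fun Y : V × V => ((c⁻¹ * a (R⁻¹ • Y.1, z + R • Y.2) : ℝ) : ℂ)) → ∀ f : 𝓢(V, ℂ),
      -(C * μ * c * ∫ ζ, ‖(𝓕 f : 𝓢(V, ℂ)) ζ‖ ^ 2 / (1 + ‖R⁻¹ • (ζ - z)‖ ^ 2) ^ N) ≤
        (BF (fun x ζ => (a (x, ζ) : ℂ) * ((φ (R⁻¹ • (ζ - z)) ^ 2 : ℝ) : ℂ)) ⇑(𝓕 f : 𝓢(V, ℂ)) f).re := by
  obtain ⟨L, hL⟩ := exists_lamL (V := V) N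
  obtain ⟨C, hC0, hC⟩ := local_lemma hφ hc L A
  refine ⟨C, hC0, fun a R c μ z hR hcp hμ ha hG f => ?_⟩
  obtain ⟨v, hv⟩ := exists_rescale (𝓕 f) z hR
  rw [BF_scale _ f v z hR hv]
  have h1 : (fun y θ => (a (R⁻¹ • y, z + R • θ) : ℂ) * ((φ (R⁻¹ • (z + R • θ - z)) ^ 2 : ℝ) : ℂ)) =
      fun y θ => (c : ℂ) * (((c⁻¹ * a (R⁻¹ • y, z + R • θ) : ℝ) : ℂ) * ((φ θ ^ 2 : ℝ) : ℂ)) := by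
    ext y θ
    rw [add_sub_cancel_left, smul_smul, inv_mul_cancel₀ hR.ne', one_smul]
    have : (c : ℂ) ≠ 0 := by exact_mod_cast hcp.ne'
    push_cast; field_simp
  rw [h1, BF_const_mul, ← mul_assoc, ← Complex.ofReal_mul, Complex.re_ofReal_mul]
  have h2 := hC (fun Y : V × V => c⁻¹ * a (R⁻¹ • Y.1, z + R • Y.2)) μ hμ hG
    (fun X => mul_nonneg (inv_nonneg.2 hcp.le) (ha _)) v
  have h3 : ∫ θ, ‖v θ‖ ^ 2 / ‖lamL L θ‖ ^ 2 ≤ ∫ θ, ‖v θ‖ ^ 2 / (1 + ‖θ‖ ^ 2) ^ N := by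
    apply integral_mono_of_nonneg (ae_of_all _ fun θ => by positivity)
    · simpa using div_weight_integrable v N 0 1
    · refine ae_of_all _ fun θ => ?_
      exact div_le_div_of_nonneg_left (by positivity) (by positivity) (hL θ)
  have h4 : ∫ ζ, ‖(𝓕 f : 𝓢(V, ℂ)) ζ‖ ^ 2 / (1 + ‖R⁻¹ • (ζ - z)‖ ^ 2) ^ N =
      R ^ Module.finrank ℝ V * ∫ θ, ‖v θ‖ ^ 2 / (1 + ‖θ‖ ^ 2) ^ N := by
    have := Measure.integral_comp_smul volume
      (fun u : V => ‖(𝓕 f : 𝓢(V, ℂ)) (z + u)‖ ^ 2 / (1 + ‖R⁻¹ • u‖ ^ 2) ^ N) R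
    simp_rw [smul_smul, inv_mul_cancel₀ hR.ne', one_smul, ← hv] at this
    rw [this, abs_of_pos (by positivity), smul_eq_mul, ← mul_assoc, mul_inv_cancel₀ (by positivity), one_mul]
    rw [← integral_add_left_eq_self _ z]
    congr 1; ext u; rw [add_sub_cancel_left]
  rw [h4]
  have h5 := mul_le_mul_of_nonneg_left h3 (mul_nonneg hC0 hμ)
  have h6 : -(C * μ * ∫ θ, ‖v θ‖ ^ 2 / (1 + ‖θ‖ ^ 2) ^ N) ≤ _ := le_trans (by linarith) h2
  have h7 := mul_le_mul_of_nonneg_left h6 (show 0 ≤ R ^ Module.finrank ℝ V * c by positivity)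
  refine le_trans (le_of_eq ?_) h7
  ring

end GE

open MeasureTheory Complex

namespace GE
open MeasureTheory SchwartzMap FourierTransform Complex
open scoped LineDeriv ContDiff ComplexConjugate

set_option linter.unusedSectionVars false
set_option linter.unusedVariables false
set_option linter.deprecated false
variable {V : Type*} [NormedAddCommGroup V] [InnerProductSpace ℝ V] [FiniteDimensional ℝ V]
  [MeasurableSpace V] [BorelSpace V]

lemma exists_weighted (g : 𝓢(V, ℂ)) (r : ℝ) : ∃ g' : 𝓢(V, ℂ), ∀ ζ, g' ζ = (((1 + ‖ζ‖ ^ 2) ^ r : ℝ) : ℂ) * g ζ := by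
  have h := Function.hasTemperateGrowth_one_add_norm_sq_rpow V r
  refine ⟨SchwartzMap.smulLeftCLM ℂ (fun ζ : V => ((1 + ‖ζ‖ ^ 2) ^ r : ℝ)) g, fun ζ => ?_⟩
  rw [SchwartzMap.smulLeftCLM_apply_apply h]; simp

lemma weight_integrable (g : 𝓢(V, ℂ)) (r : ℝ) : Integrable fun ζ => (1 + ‖ζ‖ ^ 2) ^ r * ‖g ζ‖ ^ 2 := by
  obtain ⟨g', hg'⟩ := exists_weighted g (r / 2)
  refine (schwartz_sq g').congr (ae_of_all _ fun ζ => ?_)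
  simp only [hg']
  rw [norm_mul, Complex.norm_real, Real.norm_of_nonneg (by positivity), mul_pow, ← Real.rpow_natCast,
    ← Real.rpow_mul (by positivity)]
  norm_num

lemma chij_nonneg (j : ℕ) (ζ : V) : 0 ≤ chij j ζ := om_nonneg _ _

lemma chij_weight_bdd (m : ℝ) (j : ℕ) : ∃ D : ℝ, ∀ ζ : V, (1 + ‖ζ‖ ^ 2) ^ m * chij j ζ ≤ D := by
  have hc : HasCompactSupport (fun ζ : V => (1 + ‖ζ‖ ^ 2) ^ m * chij j ζ) := by
    apply HasCompactSupport.mul_left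
    apply HasCompactSupport.intro (isCompact_closedBall (0:V) (2 * 2 ^ j))
    intro x hx
    by_contra h
    exact hx (by simpa using (chij_supp h).1)
  have hcont : Continuous (fun ζ : V => (1 + ‖ζ‖ ^ 2) ^ m * chij j ζ) := by
    refine Continuous.mul (Continuous.rpow_const (by fun_prop) fun ζ => Or.inl (by positivity)) (chij_cont j)
  obtain ⟨D, hD⟩ := hc.exists_bound_of_continuous hcont
  exact ⟨D, fun ζ => (le_abs_self _).trans (hD ζ)⟩

lemma dyadic {m ε κ : ℝ} (hκ0 : 0 < κ) (hκ1 : κ < 1) (hε : 0 < ε) {F : V × V → ℝ} (hF : Continuous F)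
    (hF0 : ∀ X, 0 ≤ F X) {M : ℝ} (hM : ∀ X, F X ≤ M * (1 + ‖X.2‖ ^ 2) ^ (m / 2)) (A : ℕ → ℝ)
    (hG : ∀ (j : ℕ) (z : V), Good A (((2:ℝ) ^ j) ^ (-ε)) (fun Y : V × V => (((((2:ℝ) ^ j) ^ m)⁻¹ *
      (F (((((2:ℝ) ^ j) ^ κ)⁻¹) • Y.1, z + (((2:ℝ) ^ j) ^ κ) • Y.2) *
        chij j (z + (((2:ℝ) ^ j) ^ κ) • Y.2)) : ℝ) : ℂ))) :
    ∃ C : ℝ, 0 ≤ C ∧ ∀ (j : ℕ) (f : 𝓢(V, ℂ)),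
      -(C * ((2:ℝ) ^ j) ^ (-(ε / 2)) * ∫ ζ, (1 + ‖ζ‖ ^ 2) ^ ((m - ε / 2) / 2) * ‖(𝓕 f : 𝓢(V, ℂ)) ζ‖ ^ 2) ≤
      (BF (fun x ζ => ((F (x, ζ) * chij j ζ : ℝ) : ℂ)) ⇑(𝓕 f : 𝓢(V, ℂ)) f).re := by
  obtain ⟨φ, hφ, hφc, hφs, hφ1⟩ := exists_phi (V := V)
  set d := Module.finrank ℝ V with hd
  obtain ⟨N, C2, hC2, hw⟩ := weight_cmp2 (V := V) hκ0 hκ1 (m - ε / 2) (d + 1)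
  obtain ⟨C1, hC1, hp⟩ := piece hφ hφc A N
  have hkI : Integrable (fun u : V => (1 + ‖u‖ ^ 2) ^ (-((d + 1 : ℕ) : ℝ))) := by
    have := integrable_rpow_neg_one_add_norm_sq (E := V) (μ := volume) (r := 2 * (d + 1)) (by push_cast; linarith)
    refine this.congr (ae_of_all _ fun u => ?_)
    simp only; congr 1; push_cast; ring
  set I := ∫ u : V, (1 + ‖u‖ ^ 2) ^ (-((d + 1 : ℕ) : ℝ)) with hI
  have hI0 : 0 ≤ I := integral_nonneg fun u => by positivity
  refine ⟨C1 * C2 * I, by positivity, fun j f => ?_⟩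
  set T : ℝ := 2 ^ j with hT
  have hT1 : 1 ≤ T := one_le_pow₀ (by norm_num)
  have hT0 : 0 < T := by linarith
  set R := T ^ κ with hR
  have hR0 : 0 < R := by positivity
  have hRT : R ≤ T := by
    calc R ≤ T ^ (1:ℝ) := Real.rpow_le_rpow_of_exponent_le hT1 hκ1.le
      _ = T := Real.rpow_one T
  set g : 𝓢(V, ℂ) := 𝓕 f with hg
  set w : V → ℝ := fun ζ => (1 + ‖ζ‖ ^ 2) ^ ((m - ε / 2) / 2) * ‖g ζ‖ ^ 2 with hwdef
  have hwI : Integrable w := weight_integrable g _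
  set k : V → ℝ := fun u => (1 + ‖R⁻¹ • u‖ ^ 2) ^ (-((d + 1 : ℕ) : ℝ)) with hk
  have hkI' : Integrable k := (integrable_comp_smul_iff volume (fun u : V => (1 + ‖u‖ ^ 2) ^ (-((d + 1 : ℕ) : ℝ))) (inv_ne_zero hR0.ne')).2 hkI
  have hkInt : ∫ u, k u = R ^ d * I := by
    have := Measure.integral_comp_inv_smul volume (fun u : V => (1 + ‖u‖ ^ 2) ^ (-((d + 1 : ℕ) : ℝ))) R
    rw [hk, this, abs_of_pos (by positivity), smul_eq_mul]
  obtain ⟨hs1, hs2⟩ := schur_aux1 hkI' hwI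
  set a : V × V → ℝ := fun X => F X * chij j X.2 with ha
  have haC : Continuous a := hF.mul ((chij_cont j).comp continuous_snd)
  have ha0 : ∀ X, 0 ≤ a X := fun X => mul_nonneg (hF0 X) (chij_nonneg _ _)
  obtain ⟨D, hD⟩ := chij_weight_bdd (V := V) (m / 2) j
  have hM0 : 0 ≤ M := by
    have h1 := hM 0
    have h2 := hF0 0
    by_contra h; push Not at h
    simp at h1; linarith
  have haB : ∀ x ζ, ‖((a (x, ζ) : ℝ) : ℂ)‖ ≤ M * D := by
    intro x ζ
    rw [Complex.norm_real, Real.norm_of_nonneg (ha0 _)]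
    calc F (x, ζ) * chij j ζ ≤ M * (1 + ‖ζ‖ ^ 2) ^ (m / 2) * chij j ζ :=
          mul_le_mul_of_nonneg_right (hM _) (chij_nonneg _ _)
      _ = M * ((1 + ‖ζ‖ ^ 2) ^ (m / 2) * chij j ζ) := by ring
      _ ≤ _ := mul_le_mul_of_nonneg_left (hD ζ) hM0
  have hav := BF_average (a := fun x ζ => ((a (x, ζ) : ℝ) : ℂ)) (by fun_prop) haB g f
    (h := fun θ => φ θ ^ 2) (hφ.continuous.pow 2)
    (by
      have h : HasCompactSupport (fun θ => φ θ * φ θ) := hφc.mul_right (f' := φ)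
      simpa only [sq] using h) hφ1 hR0
  have key : ∀ z, -(C1 * C2 * T ^ (-(ε / 2)) * ∫ ζ, k (ζ - z) * w ζ) ≤
      (BF (fun x ζ => ((a (x, ζ) : ℝ) : ℂ) * ((φ (R⁻¹ • (ζ - z)) ^ 2 : ℝ) : ℂ)) g f).re := by
    intro z
    by_cases hz : ‖z‖ ≤ 3 * T ∧ (T = 1 ∨ T / 4 ≤ ‖z‖)
    · have h1 := hp a R (T ^ m) (T ^ (-ε)) z hR0 (by positivity) (by positivity) ha0 (hG j z) f
      refine le_trans (neg_le_neg ?_) h1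
      have h2 : T ^ (-ε) * T ^ m = T ^ (-(ε / 2)) * T ^ (m - ε / 2) := by
        rw [← Real.rpow_add hT0, ← Real.rpow_add hT0]; congr 1; ring
      have h3 : T ^ (m - ε / 2) * ∫ ζ, ‖g ζ‖ ^ 2 / (1 + ‖R⁻¹ • (ζ - z)‖ ^ 2) ^ N ≤
          C2 * ∫ ζ, k (ζ - z) * w ζ := by
        rw [← integral_const_mul, ← integral_const_mul]
        apply integral_mono ((div_weight_integrable g N z _).const_mul _)
        · refine Integrable.const_mul ?_ _
          refine hwI.mono' (Continuous.aestronglyMeasurable ?_) (ae_of_all _ fun ζ => ?_)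
          · refine Continuous.mul (Continuous.rpow_const (by fun_prop) fun ζ => Or.inl (by positivity))
              (Continuous.mul (Continuous.rpow_const (by fun_prop) fun ζ => Or.inl (by positivity)) (by fun_prop))
          · have hw0 : 0 ≤ w ζ := by positivity
            have hk0 : 0 ≤ k (ζ - z) := by positivity
            rw [Real.norm_of_nonneg (mul_nonneg hk0 hw0)]
            apply mul_le_of_le_one_left hw0
            apply Real.rpow_le_one_of_one_le_of_nonpos
            · nlinarith [sq_nonneg ‖R⁻¹ • (ζ - z)‖]
            · push_cast
              have : (0:ℝ) ≤ d := Nat.cast_nonneg d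
              linarith
        · intro ζ
          have := mul_le_mul_of_nonneg_right (hw hT1 (ζ := ζ) hz.1 hz.2) (sq_nonneg ‖g ζ‖)
          refine le_trans (le_of_eq ?_) (this.trans (le_of_eq ?_))
          · simp only [hR]; ring
          · simp only [hk, hwdef, hR]; ring
      calc C1 * T ^ (-ε) * T ^ m * ∫ ζ, ‖g ζ‖ ^ 2 / (1 + ‖R⁻¹ • (ζ - z)‖ ^ 2) ^ N
          = C1 * T ^ (-(ε / 2)) * (T ^ (m - ε / 2) * ∫ ζ, ‖g ζ‖ ^ 2 / (1 + ‖R⁻¹ • (ζ - z)‖ ^ 2) ^ N) := by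
            rw [mul_assoc C1, h2]; ring
        _ ≤ C1 * T ^ (-(ε / 2)) * (C2 * ∫ ζ, k (ζ - z) * w ζ) :=
            mul_le_mul_of_nonneg_left h3 (by positivity)
        _ = _ := by ring
    · have h0 : (fun x ζ => ((a (x, ζ) : ℝ) : ℂ) * ((φ (R⁻¹ • (ζ - z)) ^ 2 : ℝ) : ℂ)) = fun x ζ => 0 := by
        ext x ζ
        by_contra hne
        have hne1 := left_ne_zero_of_mul hne
        have hne2 := right_ne_zero_of_mul hne
        have e1 : chij j ζ ≠ 0 := by
          intro h; apply hne1; simp [ha, h]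
        have e2 : φ (R⁻¹ • (ζ - z)) ≠ 0 := by
          intro h; apply hne2; simp [h]
        have e3 := hφs _ e2
        rw [norm_smul, norm_inv, Real.norm_of_nonneg hR0.le, inv_mul_le_iff₀ hR0] at e3
        obtain ⟨e4, e5⟩ := chij_supp e1
        have n1 : ‖z‖ ≤ ‖ζ‖ + ‖ζ - z‖ := by
          have := norm_sub_le ζ (ζ - z); rwa [sub_sub_cancel] at this
        have n2 : ‖ζ‖ ≤ ‖z‖ + ‖ζ - z‖ := by
          have := norm_add_le z (ζ - z); rwa [add_sub_cancel] at this
        refine hz ⟨by linarith, ?_⟩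
        rcases e5 with e5 | e5
        · left; rw [hT, e5, pow_zero]
        · right; linarith
      rw [h0]
      have : BF (fun (x ζ : V) => (0:ℂ)) g f = 0 := by simp [BF]
      rw [this, Complex.zero_re]
      have : 0 ≤ ∫ ζ, k (ζ - z) * w ζ := integral_nonneg fun ζ => by positivity
      have : 0 ≤ C1 * C2 * T ^ (-(ε / 2)) * ∫ ζ, k (ζ - z) * w ζ := by positivity
      linarith
  have hre : ∫ z, (BF (fun x ζ => ((a (x, ζ) : ℝ) : ℂ) * ((φ (R⁻¹ • (ζ - z)) ^ 2 : ℝ) : ℂ)) g f).re =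
      R ^ d * (BF (fun x ζ => ((a (x, ζ) : ℝ) : ℂ)) g f).re := by
    have := Complex.reCLM.integral_comp_comm hav.1
    rw [hav.2, Complex.reCLM_apply, Complex.re_ofReal_mul] at this
    exact this
  have hint := integral_mono ((hs1.integral_prod_left.const_mul (C1 * C2 * T ^ (-(ε / 2)))).neg) hav.1.re key
  have hlhs : ∫ z, (-fun z => C1 * C2 * T ^ (-(ε / 2)) * ∫ ζ, k (ζ - z) * w ζ) z =
      -(C1 * C2 * T ^ (-(ε / 2)) * (R ^ d * I * ∫ ζ, w ζ)) := by
    simp only [Pi.neg_apply]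
    rw [integral_neg, integral_const_mul, ← hkInt, ← hs2, integral_prod _ hs1]
  have hfin : -(C1 * C2 * T ^ (-(ε / 2)) * (R ^ d * I * ∫ ζ, w ζ)) ≤ R ^ d * (BF (fun x ζ => ((a (x, ζ) : ℝ) : ℂ)) g f).re := by
    rw [← hlhs, ← hre]; exact hint
  have hRd : 0 < R ^ d := by positivity
  refine le_of_mul_le_mul_left (le_trans (le_of_eq ?_) hfin) hRd
  ring

end GE

open MeasureTheory Complex

namespace GE
open MeasureTheory SchwartzMap FourierTransform Complex
open scoped LineDeriv ContDiff ComplexConjugate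

set_option linter.unusedSectionVars false
set_option linter.unusedVariables false
set_option linter.deprecated false
variable {V : Type*} [NormedAddCommGroup V] [InnerProductSpace ℝ V] [FiniteDimensional ℝ V]
  [MeasurableSpace V] [BorelSpace V]

lemma BF_congr {a a' : V → V → ℂ} {v v' : V → ℂ} (w : V → ℂ) (h : ∀ x θ, a x θ * v θ = a' x θ * v' θ) :
    BF a v w = BF a' v' w := by
  unfold BF
  congr 1; ext x
  congr 2; ext θ
  rw [mul_assoc, h, mul_assoc]

lemma global {m ε κ : ℝ} (hκ0 : 0 < κ) (hκ1 : κ < 1) (hε : 0 < ε) {F : V × V → ℝ} (hF : Continuous F)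
    (hF0 : ∀ X, 0 ≤ F X) {M : ℝ} (hM : ∀ X, F X ≤ M * (1 + ‖X.2‖ ^ 2) ^ (m / 2)) (A : ℕ → ℝ)
    (hG : ∀ (j : ℕ) (z : V), Good A (((2:ℝ) ^ j) ^ (-ε)) (fun Y : V × V => (((((2:ℝ) ^ j) ^ m)⁻¹ *
      (F (((((2:ℝ) ^ j) ^ κ)⁻¹) • Y.1, z + (((2:ℝ) ^ j) ^ κ) • Y.2) *
        chij j (z + (((2:ℝ) ^ j) ^ κ) • Y.2)) : ℝ) : ℂ))) :
    ∃ C : ℝ, 0 ≤ C ∧ ∀ (f : 𝓢(V, ℂ)),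
      -(C * ∫ ζ, (1 + ‖ζ‖ ^ 2) ^ ((m - ε / 2) / 2) * ‖(𝓕 f : 𝓢(V, ℂ)) ζ‖ ^ 2) ≤
      (BF (fun x ζ => (F (x, ζ) : ℂ)) ⇑(𝓕 f : 𝓢(V, ℂ)) f).re := by
  obtain ⟨C, hC0, hC⟩ := dyadic hκ0 hκ1 hε hF hF0 hM A hG
  set r : ℝ := (2:ℝ) ^ (-(ε / 2)) with hr
  have hr0 : 0 < r := by positivity
  have hr1 : r < 1 := Real.rpow_lt_one_of_one_lt_of_neg (by norm_num) (by linarith)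
  have hrj : ∀ j : ℕ, ((2:ℝ) ^ j) ^ (-(ε / 2)) = r ^ j := by
    intro j
    rw [hr, ← Real.rpow_natCast, ← Real.rpow_natCast, ← Real.rpow_mul (by norm_num),
      ← Real.rpow_mul (by norm_num), mul_comm]
  refine ⟨C * (1 - r)⁻¹, mul_nonneg hC0 (inv_nonneg.2 (by linarith)), fun f => ?_⟩
  set g : 𝓢(V, ℂ) := 𝓕 f with hg
  set W := ∫ ζ, (1 + ‖ζ‖ ^ 2) ^ ((m - ε / 2) / 2) * ‖g ζ‖ ^ 2 with hW
  have hW0 : 0 ≤ W := integral_nonneg fun ζ => by positivity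
  have hM0 : 0 ≤ M := by
    have h1 := hM 0
    have h2 := hF0 0
    by_contra h; push Not at h
    simp at h1; linarith
  have hb1 : ∀ j : ℕ, ∃ D : ℝ, ∀ x ζ : V, ‖((F (x, ζ) * chij j ζ : ℝ) : ℂ)‖ ≤ D := by
    intro j
    obtain ⟨D, hD⟩ := chij_weight_bdd (V := V) (m / 2) j
    refine ⟨M * D, fun x ζ => ?_⟩
    rw [Complex.norm_real, Real.norm_of_nonneg (mul_nonneg (hF0 _) (chij_nonneg _ _))]
    calc F (x, ζ) * chij j ζ ≤ M * (1 + ‖ζ‖ ^ 2) ^ (m / 2) * chij j ζ :=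
          mul_le_mul_of_nonneg_right (hM _) (chij_nonneg _ _)
      _ = M * ((1 + ‖ζ‖ ^ 2) ^ (m / 2) * chij j ζ) := by ring
      _ ≤ _ := mul_le_mul_of_nonneg_left (hD ζ) hM0
  have hcS : ∀ J : ℕ, Continuous fun ζ : V => ∑ j ∈ Finset.range J, chij j ζ := fun J =>
    continuous_finset_sum _ fun j _ => chij_cont j
  have hsum : ∀ J : ℕ, (∃ D : ℝ, ∀ x ζ : V, ‖((F (x, ζ) * ∑ j ∈ Finset.range J, chij j ζ : ℝ) : ℂ)‖ ≤ D) ∧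
      -(C * (∑ j ∈ Finset.range J, r ^ j) * W) ≤
        (BF (fun x ζ => ((F (x, ζ) * ∑ j ∈ Finset.range J, chij j ζ : ℝ) : ℂ)) g f).re := by
    intro J
    induction J with
    | zero => simp [BF]; exact ⟨0, le_refl _⟩
    | succ J ih =>
      obtain ⟨⟨D, hD⟩, ih2⟩ := ih
      obtain ⟨E, hE⟩ := hb1 J
      have heq : (fun (x ζ : V) => ((F (x, ζ) * ∑ j ∈ Finset.range (J+1), chij j ζ : ℝ) : ℂ)) =
        fun x ζ => ((F (x, ζ) * ∑ j ∈ Finset.range J, chij j ζ : ℝ) : ℂ) + ((F (x, ζ) * chij J ζ : ℝ) : ℂ) := by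
        ext x ζ; rw [Finset.sum_range_succ]; push_cast; ring
      constructor
      · refine ⟨D + E, fun x ζ => ?_⟩
        rw [show ((F (x, ζ) * ∑ j ∈ Finset.range (J+1), chij j ζ : ℝ) : ℂ) = _ from congrFun (congrFun heq x) ζ]
        exact (norm_add_le _ _).trans (add_le_add (hD _ _) (hE _ _))
      · have hcJ := hcS J
        have hcj := chij_cont (V := V) J
        rw [heq, BF_add (Complex.continuous_ofReal.comp (hF.mul (hcJ.comp continuous_snd))) hD
          (Complex.continuous_ofReal.comp (hF.mul (hcj.comp continuous_snd))) hE, Complex.add_re, Finset.sum_range_succ]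
        have := hC J f
        rw [hrj] at this
        have e : -(C * (∑ j ∈ Finset.range J, r ^ j + r ^ J) * W) =
          -(C * (∑ j ∈ Finset.range J, r ^ j) * W) + -(C * r ^ J * W) := by ring
        rw [e]
        exact add_le_add ih2 this
  have hgeo : ∀ J : ℕ, ∑ j ∈ Finset.range J, r ^ j ≤ (1 - r)⁻¹ := fun J => by
    rw [← tsum_geometric_of_lt_one hr0.le hr1]
    exact (summable_geometric_of_lt_one hr0.le hr1).sum_le_tsum _ (fun i _ => by positivity)
  -- the limit
  obtain ⟨g', hg'⟩ := exists_weighted g (m / 2)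
  set a' : V → V → ℂ := fun x ζ => ((F (x, ζ) * (1 + ‖ζ‖ ^ 2) ^ (-(m / 2)) : ℝ) : ℂ) with ha'
  have ha'c : Continuous fun X : V × V => a' X.1 X.2 := by
    refine Complex.continuous_ofReal.comp (Continuous.mul (by fun_prop) ?_)
    exact Continuous.rpow_const (by fun_prop) fun ζ => Or.inl (by positivity)
  have hcancel : ∀ ζ : V, (1 + ‖ζ‖ ^ 2) ^ (-(m / 2)) * (1 + ‖ζ‖ ^ 2) ^ (m / 2) = 1 := fun ζ => by
    rw [← Real.rpow_add (by positivity)]; simp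
  have ha'b : ∀ x ζ, ‖a' x ζ‖ ≤ M := by
    intro x ζ
    rw [ha', Complex.norm_real, Real.norm_of_nonneg (mul_nonneg (hF0 _) (by positivity))]
    calc F (x, ζ) * (1 + ‖ζ‖ ^ 2) ^ (-(m / 2)) ≤ M * (1 + ‖ζ‖ ^ 2) ^ (m / 2) * (1 + ‖ζ‖ ^ 2) ^ (-(m / 2)) :=
          mul_le_mul_of_nonneg_right (hM _) (by positivity)
      _ = M * ((1 + ‖ζ‖ ^ 2) ^ (-(m / 2)) * (1 + ‖ζ‖ ^ 2) ^ (m / 2)) := by ring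
      _ = M := by rw [hcancel, mul_one]
  have hcongr : ∀ (h : V → ℝ), BF (fun x ζ => ((F (x, ζ) * h ζ : ℝ) : ℂ)) g f =
      BF (fun x ζ => a' x ζ * (h ζ : ℂ)) g' f := fun h => by
    apply BF_congr
    intro x θ
    have hc : (((1 + ‖θ‖ ^ 2) ^ (-(m / 2)) : ℝ) : ℂ) * (((1 + ‖θ‖ ^ 2) ^ (m / 2) : ℝ) : ℂ) = 1 := by
      rw [← Complex.ofReal_mul, hcancel, Complex.ofReal_one]
    rw [hg', ha']
    simp only [Complex.ofReal_mul]
    linear_combination (-(F (x, θ) : ℂ) * h θ * g θ) * hc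
  have hGi := integrable_BF ha'c ha'b g' f
  have hlim : Filter.Tendsto (fun J : ℕ => BF (fun x ζ => ((F (x, ζ) * ∑ j ∈ Finset.range (J+1), chij j ζ : ℝ) : ℂ)) g f)
      Filter.atTop (nhds (BF (fun x ζ => (F (x, ζ) : ℂ)) g f)) := by
    have e1 : BF (fun x ζ => (F (x, ζ) : ℂ)) g f = BF a' g' f := by
      have := hcongr fun _ => 1
      simpa using this
    rw [e1, BF_prod ha'c ha'b]
    have hchi1 : ∀ (J : ℕ) (ζ : V), ‖((∑ j ∈ Finset.range (J+1), chij j ζ : ℝ) : ℂ)‖ ≤ 1 := fun J ζ => by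
      rw [Complex.norm_real, Real.norm_of_nonneg (Finset.sum_nonneg fun j _ => chij_nonneg _ _), chij_sum]
      exact chi_le_one _
    have e2 : ∀ J : ℕ, BF (fun x ζ => ((F (x, ζ) * ∑ j ∈ Finset.range (J+1), chij j ζ : ℝ) : ℂ)) g f =
        ∫ X : V × V, expi (inner ℝ X.1 X.2) * (a' X.1 X.2 * ((∑ j ∈ Finset.range (J+1), chij j X.2 : ℝ) : ℂ)) * g' X.2 * conj (f X.1)
        ∂(volume.prod volume) := fun J => by
      have hcJ := hcS (J+1)
      rw [hcongr, BF_prod (C := M)]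
      · exact ha'c.mul (Complex.continuous_ofReal.comp (hcJ.comp continuous_snd))
      · intro x θ
        rw [norm_mul]
        calc _ ≤ M * 1 := mul_le_mul (ha'b _ _) (hchi1 _ _) (norm_nonneg _) hM0
          _ = M := mul_one M
    simp_rw [e2]
    refine tendsto_integral_of_dominated_convergence _ (fun J => ?_) hGi.norm (fun J => ae_of_all _ fun X => ?_) (ae_of_all _ fun X => ?_)
    · have hcJ := hcS (J+1)
      have := ha'c.mul (Complex.continuous_ofReal.comp (hcJ.comp continuous_snd))
      refine Continuous.aestronglyMeasurable ?_
      refine Continuous.mul (Continuous.mul (Continuous.mul ?_ this) (by fun_prop)) ?_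
      · exact continuous_expi.comp (by fun_prop)
      · exact Complex.continuous_conj.comp (by fun_prop)
    · simp only [norm_mul]
      have := hchi1 J X.2
      gcongr
      exact mul_le_of_le_one_right (norm_nonneg _) this
    · refine tendsto_const_nhds.congr' ?_
      have hev : ∀ᶠ J : ℕ in Filter.atTop, ‖X.2‖ ≤ (2:ℝ) ^ J :=
        (tendsto_pow_atTop_atTop_of_one_lt (by norm_num : (1:ℝ) < 2)).eventually_ge_atTop _
      filter_upwards [hev] with J hJ
      rw [chij_sum, chi_one, Complex.ofReal_one, mul_one]
      rw [norm_smul, norm_inv, norm_pow, Real.norm_ofNat, inv_mul_le_iff₀ (by positivity), mul_one]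
      exact hJ
  refine ge_of_tendsto ((Complex.continuous_re.tendsto _).comp hlim) (Filter.Eventually.of_forall fun J => ?_)
  refine le_trans (neg_le_neg ?_) (hsum (J+1)).2
  have := hgeo (J+1)
  gcongr

end GE

open MeasureTheory Complex

namespace GE
open MeasureTheory SchwartzMap FourierTransform Complex
open scoped LineDeriv ContDiff ComplexConjugate

set_option linter.unusedSectionVars false
set_option linter.unusedVariables false
set_option linter.deprecated false

section dL
variable {W : Type*} [NormedAddCommGroup W] [NormedSpace ℝ W]

/-- iterated directional derivative -/
noncomputable def dL : List W → (W → ℂ) → (W → ℂ)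
  | [], F => F
  | v :: l, F => fun X => fderiv ℝ (dL l F) X v

lemma dL_smooth (l : List W) {F : W → ℂ} (hF : ContDiff ℝ ∞ F) : ContDiff ℝ ∞ (dL l F) := by
  induction l with
  | nil => exact hF
  | cons v l ih =>
    have : ContDiff ℝ ∞ (fderiv ℝ (dL l F)) := ih.fderiv_right (by simp)
    exact this.clm_apply contDiff_const

lemma dL_append (l l' : List W) (F : W → ℂ) : dL (l ++ l') F = dL l (dL l' F) := by
  induction l with
  | nil => rfl
  | cons v l ih => simp only [List.cons_append, dL, ih]

lemma dL_perm {l l' : List W} (h : l.Perm l') {F : W → ℂ} (hF : ContDiff ℝ ∞ F) : dL l F = dL l' F := by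
  induction h with
  | nil => rfl
  | cons v _ ih => simp only [dL, ih]
  | swap v w l =>
    ext X
    have hG := dL_smooth l hF
    have hG' : ContDiff ℝ ∞ (fderiv ℝ (dL l F)) := hG.fderiv_right (by simp)
    have hd : DifferentiableAt ℝ (fderiv ℝ (dL l F)) X := (hG'.differentiable (by simp)) X
    have hs : IsSymmSndFDerivAt ℝ (dL l F) X := hG.contDiffAt.isSymmSndFDerivAt (by simp; exact WithTop.coe_le_coe.2 (le_top : (2:ℕ∞) ≤ ⊤))
    simp only [dL]
    rw [fderiv_clm_apply hd (differentiableAt_const _), fderiv_clm_apply hd (differentiableAt_const _)]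
    simpa using hs.eq w v
  | trans _ _ ih1 ih2 => exact ih1.trans ih2

lemma iteratedFDeriv_eq_dL {k : ℕ} {F : W → ℂ} (hF : ContDiff ℝ ∞ F) (v : Fin k → W) (X : W) :
    iteratedFDeriv ℝ k F X v = dL (List.ofFn v) F X := by
  induction k generalizing X with
  | zero => simp [dL]
  | succ k ih =>
    rw [iteratedFDeriv_succ_apply_left, List.ofFn_succ]
    simp only [dL]
    have h1 : dL (List.ofFn fun i : Fin k => v i.succ) F = fun X => iteratedFDeriv ℝ k F X (Fin.tail v) := by
      ext Y; rw [ih]; rfl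
    rw [h1]
    have hd : DifferentiableAt ℝ (iteratedFDeriv ℝ k F) X :=
      (hF.differentiable_iteratedFDeriv (by exact_mod_cast ENat.coe_lt_top k)) X
    rw [fderiv_continuousMultilinear_apply_const_apply hd]

lemma dL_comp {W' : Type*} [NormedAddCommGroup W'] [NormedSpace ℝ W'] (ℓ : W →L[ℝ] W') (c : W') (l : List W)
    {H : W' → ℂ} (hH : ContDiff ℝ ∞ H) (X : W) :
    dL l (fun X => H (c + ℓ X)) X = dL (l.map ℓ) H (c + ℓ X) := by
  induction l generalizing X with
  | nil => rfl
  | cons v l ih =>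
    simp only [List.map_cons, dL]
    have h1 : dL l (fun X => H (c + ℓ X)) = fun X => dL (l.map ℓ) H (c + ℓ X) := by ext Y; exact ih Y
    rw [h1]
    have hd := ((dL_smooth (l.map ℓ) hH).differentiable (by simp)) (c + ℓ X)
    have h2 : HasFDerivAt (fun X => c + ℓ X) ℓ X := ℓ.hasFDerivAt.const_add c
    have := (hd.hasFDerivAt.comp X h2).fderiv
    simp only [Function.comp_def] at this
    rw [this]; rfl
end dL

section sym
variable {n : ℕ}

/-- list of a multi-index -/
def mL (α : Fin n → ℕ) : List (Fin n) := (List.finRange n).flatMap fun i => List.replicate (α i) i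

lemma pd_iter (i : Fin n) (k : ℕ) (F : (Fin n → ℝ) → ℂ) :
    (pd i)^[k] F = dL (List.replicate k (Pi.single i (1:ℝ))) F := by
  induction k with
  | zero => rfl
  | succ k ih => rw [Function.iterate_succ_apply', ih]; rfl

lemma md_eq_dL (α : Fin n → ℕ) (F : (Fin n → ℝ) → ℂ) :
    md α F = dL ((mL α).map fun i => (Pi.single i (1:ℝ) : Fin n → ℝ)) F := by
  unfold md mL
  generalize List.finRange n = l
  induction l with
  | nil => rfl
  | cons i l ih =>
    simp only [List.map_cons, List.foldr_cons, Function.comp_apply, List.flatMap_cons, List.map_append, dL_append]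
    rw [ih, pd_iter, List.map_replicate]

/-- basis vectors of the phase space -/
def bE : Fin n ⊕ Fin n → (Fin n → ℝ) × (Fin n → ℝ)
  | Sum.inl i => (Pi.single i 1, 0)
  | Sum.inr i => (0, Pi.single i 1)

lemma mixedD_eq_dL (β α : Fin n → ℕ) {σ : (Fin n → ℝ) → (Fin n → ℝ) → ℂ}
    (hσ : ContDiff ℝ ∞ fun p : (Fin n → ℝ) × (Fin n → ℝ) => σ p.1 p.2) (x ξ : Fin n → ℝ) :
    mixedD β α σ x ξ = dL (((mL β).map Sum.inl ++ (mL α).map Sum.inr).map bE)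
      (fun p : (Fin n → ℝ) × (Fin n → ℝ) => σ p.1 p.2) (x, ξ) := by
  set H := fun p : (Fin n → ℝ) × (Fin n → ℝ) => σ p.1 p.2 with hH
  have h1 : ∀ x' ξ' : Fin n → ℝ, md α (fun ξ' => σ x' ξ') ξ' = dL (((mL α).map Sum.inr).map bE) H (x', ξ') := by
    intro x' ξ'
    rw [md_eq_dL]
    have := dL_comp (ContinuousLinearMap.inr ℝ (Fin n → ℝ) (Fin n → ℝ)) (x', 0)
      ((mL α).map fun i => (Pi.single i (1:ℝ) : Fin n → ℝ)) hσ ξ'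
    simp only [ContinuousLinearMap.inr_apply, Prod.mk_add_mk, add_zero, zero_add, List.map_map] at this
    simp only [List.map_map]
    exact this
  unfold mixedD
  simp_rw [h1]
  rw [md_eq_dL, List.map_append, dL_append]
  have := dL_comp (ContinuousLinearMap.inl ℝ (Fin n → ℝ) (Fin n → ℝ)) (0, ξ)
      ((mL β).map fun i => (Pi.single i (1:ℝ) : Fin n → ℝ)) (dL_smooth (((mL α).map Sum.inr).map bE) hσ) x
  simp only [ContinuousLinearMap.inl_apply, Prod.mk_add_mk, add_zero, zero_add, List.map_map] at this
  simp only [List.map_map]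
  exact this

lemma count_mL (α : Fin n → ℕ) (i : Fin n) : (mL α).count i = α i := by
  unfold mL
  rw [List.count_flatMap]
  simp only [Function.comp_def, List.count_replicate, beq_iff_eq]
  have : (fun x : Fin n => if x = i then α x else 0) = fun x => if x = i then α i else 0 := by
    ext x; split_ifs with h <;> simp [h]
  rw [this, ← Fin.sum_univ_def]; simp

lemma lawful_sum : LawfulBEq (Fin n ⊕ Fin n) where
  eq_of_beq := by
    rintro (a | a) (b | b) h
    · exact congrArg Sum.inl (eq_of_beq (α := Fin n) h)
    · exact (Bool.false_ne_true h).elim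
    · exact (Bool.false_ne_true h).elim
    · exact congrArg Sum.inr (eq_of_beq (α := Fin n) h)
  rfl := by
    rintro (a | a)
    · exact (beq_self_eq_true a : (a == a) = true)
    · exact (beq_self_eq_true a : (a == a) = true)

lemma perm_mL (l : List (Fin n ⊕ Fin n)) :
    l.Perm ((mL fun i => l.count (Sum.inl i)).map Sum.inl ++ (mL fun i => l.count (Sum.inr i)).map Sum.inr) := by
  have := lawful_sum (n := n)
  rw [List.perm_iff_count]
  rintro (i | i)
  · rw [List.count_append, List.count_map_of_injective _ _ Sum.inl_injective, count_mL,
      List.count_eq_zero_of_not_mem (l := List.map _ _) (by simp), add_zero]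
  · rw [List.count_append, List.count_map_of_injective _ _ Sum.inr_injective, count_mL,
      List.count_eq_zero_of_not_mem (l := List.map Sum.inl _) (by simp), zero_add]

end sym
end GE

open MeasureTheory Complex

namespace GE
open MeasureTheory SchwartzMap FourierTransform Complex
open scoped LineDeriv ContDiff ComplexConjugate

set_option linter.unusedSectionVars false
set_option linter.unusedVariables false
set_option linter.deprecated false

lemma multilin_norm {W ι : Type*} [NormedAddCommGroup W] [NormedSpace ℝ W] [Fintype ι]
    (b : ι → W) (co : ι → W → ℝ) (h1 : ∀ Y, Y = ∑ c, co c Y • b c) (h2 : ∀ c Y, |co c Y| ≤ ‖Y‖)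
    {k : ℕ} (M : ContinuousMultilinearMap ℝ (fun _ : Fin k => W) ℂ) {B : ℝ} (hB : 0 ≤ B)
    (hM : ∀ r : Fin k → ι, ‖M (fun i => b (r i))‖ ≤ B) :
    ‖M‖ ≤ (Fintype.card (Fin k → ι) : ℝ) * B := by
  classical
  refine M.opNorm_le_bound (by positivity) fun Y => ?_
  have e1 : M Y = ∑ r : Fin k → ι, (∏ i, co (r i) (Y i)) • M (fun i => b (r i)) := by
    have : Y = fun i => ∑ c, co c (Y i) • b c := by ext i; exact h1 (Y i)
    conv_lhs => rw [this]
    rw [M.map_sum]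
    refine Finset.sum_congr rfl fun r _ => ?_
    rw [M.map_smul_univ]
  rw [e1]
  refine (norm_sum_le _ _).trans ?_
  calc ∑ r : Fin k → ι, ‖(∏ i, co (r i) (Y i)) • M (fun i => b (r i))‖
      ≤ ∑ r : Fin k → ι, (∏ i, ‖Y i‖) * B := by
        refine Finset.sum_le_sum fun r _ => ?_
        rw [norm_smul, norm_prod]
        refine mul_le_mul ?_ (hM r) (norm_nonneg _) (by positivity)
        exact Finset.prod_le_prod (fun i _ => norm_nonneg _) fun i _ => h2 _ _
    _ = _ := by rw [Finset.sum_const, Finset.card_univ, nsmul_eq_mul]; ring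

section sym
variable {n : ℕ}

/-- exponent cost -/
def qe (ρ δ : ℝ) : Fin n ⊕ Fin n → ℝ
  | Sum.inl _ => δ
  | Sum.inr _ => -ρ

lemma length_mL (α : Fin n → ℕ) : ((mL α).length : ℝ) = mOrd α := by
  unfold mL mOrd
  rw [List.length_flatMap]
  simp only [List.length_replicate]
  rw [← Fin.sum_univ_def]; push_cast; rfl

lemma tuple_bound {m ρ δ : ℝ} {σ : (Fin n → ℝ) → (Fin n → ℝ) → ℂ} (hσ : SymbolClass m ρ δ σ) (k : ℕ) :
    ∃ C : ℝ, 0 ≤ C ∧ ∀ (u : Fin k → Fin n ⊕ Fin n) (X : (Fin n → ℝ) × (Fin n → ℝ)),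
      ‖iteratedFDeriv ℝ k (fun p : (Fin n → ℝ) × (Fin n → ℝ) => σ p.1 p.2) X (fun i => bE (u i))‖ ≤
        C * wt X.2 ^ ((m + ∑ i, qe ρ δ (u i)) / 2) := by
  classical
  have hs : ContDiff ℝ ∞ fun p : (Fin n → ℝ) × (Fin n → ℝ) => σ p.1 p.2 := hσ.1
  have h : ∀ u : Fin k → Fin n ⊕ Fin n, ∃ C : ℝ, 0 ≤ C ∧ ∀ X : (Fin n → ℝ) × (Fin n → ℝ),
      ‖iteratedFDeriv ℝ k (fun p : (Fin n → ℝ) × (Fin n → ℝ) => σ p.1 p.2) X (fun i => bE (u i))‖ ≤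
        C * wt X.2 ^ ((m + ∑ i, qe ρ δ (u i)) / 2) := by
    intro u
    have hp := perm_mL (List.ofFn u)
    generalize (fun i => (List.ofFn u).count (Sum.inl i)) = β at hp
    generalize (fun i => (List.ofFn u).count (Sum.inr i)) = α at hp
    obtain ⟨C, hC, hb⟩ := hσ.2 α β
    refine ⟨C, hC.le, fun X => ?_⟩
    have e1 : ∑ i, qe ρ δ (u i) = - ρ * mOrd α + δ * mOrd β := by
      have h1 := (hp.map (qe ρ δ)).sum_eq
      rw [List.map_ofFn, List.sum_ofFn] at h1
      simp only [Function.comp_apply] at h1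
      rw [h1, List.map_append, List.sum_append, List.map_map, List.map_map, ← length_mL, ← length_mL]
      have c1 : (qe ρ δ ∘ Sum.inl : Fin n → ℝ) = fun _ => δ := rfl
      have c2 : (qe ρ δ ∘ Sum.inr : Fin n → ℝ) = fun _ => -ρ := rfl
      rw [c1, c2, List.map_const', List.map_const', List.sum_replicate, List.sum_replicate]
      simp only [nsmul_eq_mul]; ring
    rw [iteratedFDeriv_eq_dL hs, e1]
    have e2 : (List.ofFn fun i => bE (u i)) = (List.ofFn u).map bE := by rw [List.map_ofFn]; rfl
    rw [e2, dL_perm (hp.map bE) hs]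
    have := hb X.1 X.2
    rw [mixedD_eq_dL β α hs] at this
    convert this using 3
    ring
  choose C hC0 hC using h
  refine ⟨∑ u, C u, Finset.sum_nonneg fun u _ => hC0 u, fun u X => (hC u X).trans ?_⟩
  have hw : 0 ≤ wt X.2 := by unfold wt; positivity
  gcongr
  exact Finset.single_le_sum (f := C) (fun u _ => hC0 u) (Finset.mem_univ u)

/-- phase space scaling -/
noncomputable def ell (n : ℕ) (R : ℝ) : (EuclideanSpace ℝ (Fin n) × EuclideanSpace ℝ (Fin n)) →L[ℝ] (Fin n → ℝ) × (Fin n → ℝ) :=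
  ((R⁻¹ • (EuclideanSpace.equiv (Fin n) ℝ : EuclideanSpace ℝ (Fin n) →L[ℝ] (Fin n → ℝ))).comp
    (ContinuousLinearMap.fst ℝ _ _)).prod
  ((R • (EuclideanSpace.equiv (Fin n) ℝ : EuclideanSpace ℝ (Fin n) →L[ℝ] (Fin n → ℝ))).comp
    (ContinuousLinearMap.snd ℝ _ _))

/-- basis -/
noncomputable def bV : Fin n ⊕ Fin n → EuclideanSpace ℝ (Fin n) × EuclideanSpace ℝ (Fin n)
  | Sum.inl i => (EuclideanSpace.single i 1, 0)
  | Sum.inr i => (0, EuclideanSpace.single i 1)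

/-- coordinates -/
def coV : Fin n ⊕ Fin n → EuclideanSpace ℝ (Fin n) × EuclideanSpace ℝ (Fin n) → ℝ
  | Sum.inl i, Y => Y.1 i
  | Sum.inr i, Y => Y.2 i

lemma bV_sum (Y : EuclideanSpace ℝ (Fin n) × EuclideanSpace ℝ (Fin n)) : Y = ∑ c, coV c Y • bV c := by
  rw [Fintype.sum_sum_type]
  apply Prod.ext
  · simp only [coV, bV, Prod.fst_add, Prod.fst_sum, Prod.smul_fst, smul_zero, Finset.sum_const_zero, add_zero]
    ext i; simp [Finset.sum_apply, Pi.single_apply]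
  · simp only [coV, bV, Prod.snd_add, Prod.snd_sum, Prod.smul_snd, smul_zero, Finset.sum_const_zero, zero_add]
    ext i; simp [Finset.sum_apply, Pi.single_apply]

lemma coV_le (c : Fin n ⊕ Fin n) (Y : EuclideanSpace ℝ (Fin n) × EuclideanSpace ℝ (Fin n)) : |coV c Y| ≤ ‖Y‖ := by
  rcases c with i | i
  · exact (PiLp.norm_apply_le Y.1 i).trans (norm_fst_le Y)
  · exact (PiLp.norm_apply_le Y.2 i).trans (norm_snd_le Y)

lemma ell_bV {T κ : ℝ} (hT : 0 < T) (c : Fin n ⊕ Fin n) :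
    ell n (T ^ κ) (bV c) = (T ^ (-(qe κ κ c))) • bE c := by
  rcases c with i | i
  · simp only [ell, bV, bE, qe]
    apply Prod.ext
    · ext j; simp [Real.rpow_neg hT.le, Pi.single_apply]
    · ext j; simp
  · simp only [ell, bV, bE, qe]
    apply Prod.ext
    · ext j; simp
    · ext j; simp [Pi.single_apply]

lemma scaled_bound {m ρ δ : ℝ} {σ : (Fin n → ℝ) → (Fin n → ℝ) → ℂ} (hσ : SymbolClass m ρ δ σ) (k : ℕ) :
    ∃ C : ℝ, 0 ≤ C ∧ ∀ (T : ℝ), 0 < T → ∀ (c : (Fin n → ℝ) × (Fin n → ℝ))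
      (Y : EuclideanSpace ℝ (Fin n) × EuclideanSpace ℝ (Fin n)),
      T ^ 2 / 4 ≤ wt (c + ell n (T ^ ((ρ + δ) / 2)) Y).2 → wt (c + ell n (T ^ ((ρ + δ) / 2)) Y).2 ≤ 5 * T ^ 2 →
      ‖iteratedFDeriv ℝ k (fun Y => (fun p : (Fin n → ℝ) × (Fin n → ℝ) => σ p.1 p.2) (c + ell n (T ^ ((ρ + δ) / 2)) Y)) Y‖ ≤
        C * T ^ (m - (ρ - δ) / 2 * k) := by
  classical
  have hs : ContDiff ℝ ∞ fun p : (Fin n → ℝ) × (Fin n → ℝ) => σ p.1 p.2 := hσ.1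
  obtain ⟨C, hC0, hC⟩ := tuple_bound hσ k
  set D := ∑ u : Fin k → Fin n ⊕ Fin n, (5:ℝ) ^ |(m + ∑ i, qe ρ δ (u i)) / 2| with hD
  have hD0 : 0 ≤ D := Finset.sum_nonneg fun u _ => by positivity
  refine ⟨Fintype.card (Fin k → Fin n ⊕ Fin n) * (C * D), by positivity, fun T hT c Y h1 h2 => ?_⟩
  set κ := (ρ + δ) / 2 with hκ
  set H := fun p : (Fin n → ℝ) × (Fin n → ℝ) => σ p.1 p.2 with hH
  set X := c + ell n (T ^ κ) Y with hX
  rw [mul_assoc]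
  have hHc : ContDiff ℝ ∞ fun Y => H (c + ell n (T ^ κ) Y) :=
    hs.comp (contDiff_const.add (ell n (T ^ κ)).contDiff)
  refine multilin_norm bV coV bV_sum coV_le _ (by positivity) fun r => ?_
  have e1 : iteratedFDeriv ℝ k (fun Y => H (c + ell n (T ^ κ) Y)) Y (fun i => bV (r i)) =
      (∏ i, T ^ (-(qe κ κ (r i)))) • iteratedFDeriv ℝ k H X (fun i => bE (r i)) := by
    rw [← ContinuousMultilinearMap.map_smul_univ, iteratedFDeriv_eq_dL hHc, dL_comp _ _ _ hs, iteratedFDeriv_eq_dL hs,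
      List.map_ofFn]
    congr 2
    ext i : 1
    exact ell_bV hT (r i)
  rw [e1, norm_smul, Real.norm_of_nonneg (Finset.prod_nonneg fun i _ => by positivity), ← Real.rpow_sum_of_pos hT]
  set q := m + ∑ i, qe ρ δ (r i) with hq
  have hw : wt X.2 ^ (q / 2) ≤ D * T ^ q := by
    have hy : wt X.2 = T ^ 2 * (wt X.2 / T ^ 2) := by field_simp
    set y := wt X.2 / T ^ 2 with hydef
    have hy1 : 5⁻¹ ≤ y := by rw [hydef, le_div_iff₀ (by positivity)]; nlinarith [sq_nonneg T]
    have hy2 : y ≤ 5 := by rw [hydef, div_le_iff₀ (by positivity)]; exact h2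
    have hy0 : 0 < y := lt_of_lt_of_le (by norm_num) hy1
    rw [hy, Real.mul_rpow (by positivity) hy0.le, ← Real.rpow_natCast, ← Real.rpow_mul hT.le]
    rw [show ((2:ℕ):ℝ) * (q / 2) = q by push_cast; ring, mul_comm]
    gcongr
    have h3 : y ^ (q / 2) ≤ 5 ^ |q / 2| := by
      rcases le_total 0 (q / 2) with h | h
      · rw [abs_of_nonneg h]; exact Real.rpow_le_rpow hy0.le hy2 h
      · rw [abs_of_nonpos h]
        have := Real.rpow_le_rpow_of_nonpos (by norm_num) hy1 h
        rwa [Real.inv_rpow (by norm_num), ← Real.rpow_neg (by norm_num)] at this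
    refine h3.trans ?_
    exact Finset.single_le_sum (f := fun u : Fin k → Fin n ⊕ Fin n => (5:ℝ) ^ |(m + ∑ i, qe ρ δ (u i)) / 2|)
      (fun u _ => by positivity) (Finset.mem_univ r)
  have hex : ∑ i, -(qe κ κ (r i)) + q = m - (ρ - δ) / 2 * k := by
    have : ∀ c : Fin n ⊕ Fin n, -(qe κ κ c) + qe ρ δ c = -((ρ - δ) / 2) := by
      rintro (i | i) <;> simp only [qe, hκ] <;> ring
    have h4 : ∑ i, (-(qe κ κ (r i)) + qe ρ δ (r i)) = -((ρ - δ) / 2) * k := by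
      rw [Finset.sum_congr rfl fun i _ => this (r i)]; simp; ring
    rw [Finset.sum_add_distrib] at h4
    rw [hq]; linarith
  calc T ^ (∑ i, -(qe κ κ (r i))) * ‖iteratedFDeriv ℝ k H X (fun i => bE (r i))‖
      ≤ T ^ (∑ i, -(qe κ κ (r i))) * (C * (D * T ^ q)) := by
        have := hC r X
        gcongr
        exact this.trans (by gcongr)
    _ = C * D * (T ^ (∑ i, -(qe κ κ (r i))) * T ^ q) := by ring
    _ = _ := by rw [← Real.rpow_add hT, hex]

end sym
end GE

open MeasureTheory Complex

namespace GE
open MeasureTheory SchwartzMap FourierTransform Complex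
open scoped LineDeriv ContDiff ComplexConjugate

set_option linter.unusedSectionVars false
set_option linter.unusedVariables false
set_option linter.deprecated false
variable {V : Type*} [NormedAddCommGroup V] [InnerProductSpace ℝ V] [FiniteDimensional ℝ V]
  [MeasurableSpace V] [BorelSpace V]

lemma omC_bound : ∃ D : ℕ → ℝ, (∀ k, 0 ≤ D k) ∧ ∀ (j k : ℕ) (u : V), ‖iteratedFDeriv ℝ k (fun u => (om j u : ℂ)) u‖ ≤ D k := by
  have h1 : ∀ j k : ℕ, ∃ D : ℝ, ∀ u : V, ‖iteratedFDeriv ℝ k (fun u => (om j u : ℂ)) u‖ ≤ D := by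
    intro j k
    have hs : ContDiff ℝ ∞ (fun u : V => (om j u : ℂ)) := Complex.ofRealCLM.contDiff.comp (om_smooth j)
    have hc : HasCompactSupport (fun u : V => (om j u : ℂ)) := by
      apply HasCompactSupport.intro (isCompact_closedBall (0:V) 2)
      intro x hx
      have : 2 ≤ ‖x‖ := by simp at hx; exact hx.le
      rw [om_zero_of_large j this, Complex.ofReal_zero]
    exact (hc.iteratedFDeriv (𝕜 := ℝ) k).exists_bound_of_continuous
      (hs.continuous_iteratedFDeriv (WithTop.coe_le_coe.2 le_top))
  choose D hD using h1
  have hD0 : ∀ j k, 0 ≤ D j k := fun j k => (norm_nonneg _).trans (hD j k 0)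
  refine ⟨fun k => D 0 k + D 1 k, fun k => add_nonneg (hD0 _ _) (hD0 _ _), fun j k u => ?_⟩
  rcases j with _ | j
  · exact (hD 0 k u).trans (by linarith [hD0 1 k])
  · have : (fun u : V => (om (j + 1) u : ℂ)) = fun u => (om 1 u : ℂ) := by ext u; simp [om]
    rw [this]
    exact (hD 1 k u).trans (by linarith [hD0 0 k])

lemma cut_bound {D : ℕ → ℝ} (hD : ∀ (j k : ℕ) (u : V), ‖iteratedFDeriv ℝ k (fun u => (om j u : ℂ)) u‖ ≤ D k)
    (j k : ℕ) (z : V) {R : ℝ} (hR : 0 < R) (Y : V × V) :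
    ContDiff ℝ ∞ (fun Y : V × V => (chij j (z + R • Y.2) : ℂ)) ∧
    ‖iteratedFDeriv ℝ k (fun Y : V × V => (chij j (z + R • Y.2) : ℂ)) Y‖ ≤ D k * (R / 2 ^ j) ^ k := by
  have hs : ContDiff ℝ ∞ (fun u : V => (om j u : ℂ)) := Complex.ofRealCLM.contDiff.comp (om_smooth j)
  set g : V → ℂ := fun u => (om j (((2:ℝ) ^ j)⁻¹ • z + u) : ℂ) with hg
  have hgs : ContDiff ℝ ∞ g := hs.comp (contDiff_const.add contDiff_id)
  set ℓ : V × V →L[ℝ] V := (R / 2 ^ j) • ContinuousLinearMap.snd ℝ V V with hℓ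
  have e : (fun Y : V × V => (chij j (z + R • Y.2) : ℂ)) = g ∘ ℓ := by
    ext Y
    simp only [chij, hg, hℓ, Function.comp_apply, smul_add, smul_smul, ContinuousLinearMap.smul_apply,
      ContinuousLinearMap.coe_snd']
    congr 4; ring
  rw [e]
  refine ⟨hgs.comp ℓ.contDiff, ?_⟩
  rw [ContinuousLinearMap.iteratedFDeriv_comp_right ℓ hgs Y (WithTop.coe_le_coe.2 le_top)]
  refine (ContinuousMultilinearMap.norm_compContinuousLinearMap_le _ _).trans ?_
  rw [Finset.prod_const, Finset.card_univ, Fintype.card_fin]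
  have h1 : ‖iteratedFDeriv ℝ k g (ℓ Y)‖ ≤ D k := by
    rw [show iteratedFDeriv ℝ k g (ℓ Y) = _ from
      iteratedFDeriv_comp_add_left (f := fun u : V => (om j u : ℂ)) k (((2:ℝ) ^ j)⁻¹ • z) (ℓ Y)]
    exact hD j k _
  have h2 : ‖ℓ‖ ≤ R / 2 ^ j := by
    refine ContinuousLinearMap.opNorm_le_bound _ (by positivity) fun Y => ?_
    rw [show ℓ Y = (R / 2 ^ j) • Y.2 from rfl, norm_smul, Real.norm_of_nonneg (by positivity)]
    exact mul_le_mul_of_nonneg_left (norm_snd_le Y) (by positivity)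
  have := (norm_nonneg _).trans h1
  gcongr

lemma wt_ofLp {n : ℕ} (x : EuclideanSpace ℝ (Fin n)) : wt (WithLp.ofLp x) = 1 + ‖x‖ ^ 2 := by
  rw [EuclideanSpace.norm_sq_eq]; simp [wt]

lemma good_symbol {n : ℕ} {m ρ δ : ℝ} (hρ : ρ ≤ 1) (hδρ : δ < ρ) (hδ0 : 0 ≤ δ)
    {σ : (Fin n → ℝ) → (Fin n → ℝ) → ℝ}
    (hσ : SymbolClass m ρ δ (fun x ξ => ((σ x ξ : ℝ) : ℂ))) :
    ∃ A : ℕ → ℝ, ∀ (j : ℕ) (z : EuclideanSpace ℝ (Fin n)), Good A (((2:ℝ) ^ j) ^ (-((ρ - δ) / 2)))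
      (fun Y : EuclideanSpace ℝ (Fin n) × EuclideanSpace ℝ (Fin n) => (((((2:ℝ) ^ j) ^ m)⁻¹ *
      ((fun X : EuclideanSpace ℝ (Fin n) × EuclideanSpace ℝ (Fin n) => σ (WithLp.ofLp X.1) (WithLp.ofLp X.2))
       (((((2:ℝ) ^ j) ^ ((ρ + δ) / 2))⁻¹) • Y.1, z + (((2:ℝ) ^ j) ^ ((ρ + δ) / 2)) • Y.2) *
        chij j (z + (((2:ℝ) ^ j) ^ ((ρ + δ) / 2)) • Y.2)) : ℝ) : ℂ)) := by
  have hb := fun k => scaled_bound hσ k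
  choose C hC0 hC using hb
  obtain ⟨D, hD0, hD⟩ := omC_bound (V := EuclideanSpace ℝ (Fin n))
  set A : ℕ → ℝ := fun k => ∑ i ∈ Finset.range (k + 1), (k.choose i : ℝ) * C i * D (k - i) with hA
  have hA0 : ∀ k, 0 ≤ A k := fun k => Finset.sum_nonneg fun i _ =>
    mul_nonneg (mul_nonneg (by positivity) (hC0 _)) (hD0 _)
  refine ⟨A, fun j z => ?_⟩
  set T : ℝ := 2 ^ j with hT
  have hT1 : 1 ≤ T := one_le_pow₀ (by norm_num)
  have hT0 : 0 < T := by linarith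
  set κ := (ρ + δ) / 2 with hκ
  set ε := (ρ - δ) / 2 with hε
  set R := T ^ κ with hR
  have hR0 : 0 < R := by positivity
  set H := fun p : (Fin n → ℝ) × (Fin n → ℝ) => ((σ p.1 p.2 : ℝ) : ℂ) with hH
  set c : (Fin n → ℝ) × (Fin n → ℝ) := (0, WithLp.ofLp z) with hc
  set Φ : EuclideanSpace ℝ (Fin n) × EuclideanSpace ℝ (Fin n) → ℂ := fun Y => H (c + ell n R Y) with hΦ
  set ψ : EuclideanSpace ℝ (Fin n) × EuclideanSpace ℝ (Fin n) → ℂ := fun Y => (chij j (z + R • Y.2) : ℂ) with hψ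
  have hHs : ContDiff ℝ ∞ H := hσ.1
  have hΦs : ContDiff ℝ ∞ Φ := hHs.comp (contDiff_const.add (ell n R).contDiff)
  have hψs : ContDiff ℝ ∞ ψ := (cut_bound hD j 0 z hR0 0).1
  have eP : (fun Y : EuclideanSpace ℝ (Fin n) × EuclideanSpace ℝ (Fin n) => (((T ^ m)⁻¹ *
      ((fun X : EuclideanSpace ℝ (Fin n) × EuclideanSpace ℝ (Fin n) => σ (WithLp.ofLp X.1) (WithLp.ofLp X.2))
       (R⁻¹ • Y.1, z + R • Y.2) * chij j (z + R • Y.2)) : ℝ) : ℂ)) = (T ^ m)⁻¹ • (fun Y => Φ Y * ψ Y) := by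
    ext Y
    have : c + ell n R Y = (WithLp.ofLp (R⁻¹ • Y.1), WithLp.ofLp (z + R • Y.2)) := by
      simp [hc, ell]
      exact ⟨rfl, rfl⟩
    simp only [hΦ, hψ, hH, this, Pi.smul_apply, Complex.real_smul]
    push_cast; ring
  rw [eP]
  have hsm : ContDiff ℝ ∞ (fun Y => Φ Y * ψ Y) := hΦs.mul hψs
  have main : ∀ k Y, ‖iteratedFDeriv ℝ k ((T ^ m)⁻¹ • (fun Y => Φ Y * ψ Y)) Y‖ ≤ T ^ (-(ε * k)) * A k := by
    intro k Y
    rw [iteratedFDeriv_const_smul_apply (hsm.contDiffAt.of_le (WithTop.coe_le_coe.2 le_top)), norm_smul,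
      Real.norm_of_nonneg (by positivity)]
    by_cases hY : ‖z + R • Y.2‖ ≤ 2 * T ∧ (j = 0 ∨ T / 2 ≤ ‖z + R • Y.2‖)
    · have hwt : wt (c + ell n R Y).2 = 1 + ‖z + R • Y.2‖ ^ 2 := by
        rw [← wt_ofLp]; congr 1
      have hw1 : T ^ 2 / 4 ≤ wt (c + ell n R Y).2 := by
        rw [hwt]
        rcases hY.2 with h | h
        · have : T = 1 := by rw [hT, h, pow_zero]
          rw [this]; nlinarith [sq_nonneg ‖z + R • Y.2‖]
        · nlinarith
      have hw2 : wt (c + ell n R Y).2 ≤ 5 * T ^ 2 := by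
        rw [hwt]; nlinarith [hY.1, norm_nonneg (z + R • Y.2)]
      have h1 : ∀ i, ‖iteratedFDeriv ℝ i Φ Y‖ ≤ C i * T ^ (m - ε * i) := fun i => hC i T hT0 c Y hw1 hw2
      have hRT : R / 2 ^ j ≤ T ^ (-ε) := by
        rw [← hT, hR, div_eq_mul_inv, ← Real.rpow_neg_one, ← Real.rpow_add hT0]
        apply Real.rpow_le_rpow_of_exponent_le hT1
        rw [hκ, hε]; linarith
      have h2 : ∀ i, ‖iteratedFDeriv ℝ i ψ Y‖ ≤ D i * T ^ (-(ε * i)) := fun i => by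
        refine (cut_bound hD j i z hR0 Y).2.trans ?_
        have := hD0 i
        rw [show -(ε * i) = (-ε) * (i:ℝ) by ring, Real.rpow_mul hT0.le, Real.rpow_natCast]
        gcongr
      have h3 := norm_iteratedFDeriv_mul_le (n := k) (N := ∞) hΦs hψs Y (WithTop.coe_le_coe.2 le_top)
      have h4 : ‖iteratedFDeriv ℝ k (fun Y => Φ Y * ψ Y) Y‖ ≤ T ^ (m - ε * k) * A k := by
        refine h3.trans ?_
        rw [hA, Finset.mul_sum]
        refine Finset.sum_le_sum fun i hi => ?_
        have hik : i ≤ k := by simpa [Nat.lt_succ_iff] using hi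
        have e5 : T ^ (m - ε * k) = T ^ (m - ε * i) * T ^ (-(ε * ((k - i : ℕ) : ℝ))) := by
          rw [← Real.rpow_add hT0, Nat.cast_sub hik]; congr 1; ring
        calc (k.choose i : ℝ) * ‖iteratedFDeriv ℝ i Φ Y‖ * ‖iteratedFDeriv ℝ (k - i) ψ Y‖
            ≤ (k.choose i : ℝ) * (C i * T ^ (m - ε * i)) * (D (k - i) * T ^ (-(ε * ((k - i : ℕ) : ℝ)))) := by
              have := hC0 i
              exact mul_le_mul (mul_le_mul_of_nonneg_left (h1 i) (by positivity)) (h2 _) (norm_nonneg _)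
                (by positivity)
          _ = _ := by rw [e5]; ring
      calc (T ^ m)⁻¹ * ‖iteratedFDeriv ℝ k (fun Y => Φ Y * ψ Y) Y‖ ≤ (T ^ m)⁻¹ * (T ^ (m - ε * k) * A k) := by gcongr
        _ = _ := by
          rw [← mul_assoc, ← Real.rpow_neg hT0.le, ← Real.rpow_add hT0]; congr 2; ring
    · have hz : iteratedFDeriv ℝ k (fun Y => Φ Y * ψ Y) Y = 0 := by
        by_contra hne
        have h1 := support_iteratedFDeriv_subset (𝕜 := ℝ) k (f := fun Y => Φ Y * ψ Y) hne
        have hcl : IsClosed {Y : EuclideanSpace ℝ (Fin n) × EuclideanSpace ℝ (Fin n) |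
            ‖z + R • Y.2‖ ≤ 2 * T ∧ (j = 0 ∨ T / 2 ≤ ‖z + R • Y.2‖)} := by
          have hcn : Continuous fun Y : EuclideanSpace ℝ (Fin n) × EuclideanSpace ℝ (Fin n) => ‖z + R • Y.2‖ := by
            fun_prop
          exact (isClosed_le hcn continuous_const).inter (isClosed_const.union (isClosed_le continuous_const hcn))
        exact hY (closure_minimal (fun Z hZ => chij_supp (by
          intro h0
          apply hZ
          simp [hψ, h0])) hcl h1)
      rw [hz, norm_zero, mul_zero]
      exact mul_nonneg (by positivity) (hA0 k)
  refine ⟨contDiff_const.smul hsm, ⟨A 0, fun X => ?_⟩, fun k hk X => (main k X).trans ?_⟩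
  · have := main 0 X
    simpa using this
  · have : T ^ (-(ε * k)) ≤ T ^ (-ε) := by
      apply Real.rpow_le_rpow_of_exponent_le hT1
      have h1 : (1:ℝ) ≤ k := by exact_mod_cast hk
      have : 0 < ε := by rw [hε]; linarith
      nlinarith
    exact mul_le_mul_of_nonneg_right this (hA0 k)

end GE

open MeasureTheory Complex

namespace GE
open MeasureTheory SchwartzMap FourierTransform Complex
open scoped LineDeriv ContDiff ComplexConjugate

set_option linter.unusedSectionVars false
set_option linter.unusedVariables false
set_option linter.deprecated false

lemma interp {C η ε δ : ℝ} (m : ℝ) (hC : 0 ≤ C) (hη : 0 < η) (hε : 0 < ε) (hδ : 0 ≤ δ) :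
    ∃ C' : ℝ, 0 < C' ∧ ∀ B : ℝ, 1 ≤ B →
      C * B ^ ((m - ε / 2) / 2) ≤ η * B ^ ((m + δ) / 2) + C' * B ^ ((m - 2 * ε) / 2) := by
  refine ⟨C * (C / η) ^ 3 + 1, by positivity, fun B hB => ?_⟩
  have hB0 : 0 < B := by linarith
  set p := B ^ (ε / 4) with hp
  set Q := B ^ ((m - ε / 2) / 2) with hQ
  have hp0 : 0 < p := by positivity
  have hQ0 : 0 < Q := by positivity
  have h1 : Q * p ≤ B ^ ((m + δ) / 2) := by
    rw [hQ, hp, ← Real.rpow_add hB0]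
    exact Real.rpow_le_rpow_of_exponent_le hB (by linarith)
  have h2 : B ^ ((m - 2 * ε) / 2) = Q / p ^ 3 := by
    rw [hQ, hp, ← Real.rpow_natCast, ← Real.rpow_mul hB0.le, ← Real.rpow_sub hB0]
    congr 1; push_cast; ring
  rw [h2]
  have h3 : 0 < Q / p ^ 3 := by positivity
  have h4 : 0 ≤ (C * (C / η) ^ 3 + 1) * (Q / p ^ 3) := by positivity
  rcases le_total (C / η) p with h | h
  · have : C ≤ η * p := by rwa [div_le_iff₀ hη, mul_comm] at h
    have h5 := mul_le_mul_of_nonneg_left h1 hη.le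
    have h6 := mul_le_mul_of_nonneg_right this hQ0.le
    nlinarith
  · have h5 : p ^ 3 ≤ (C / η) ^ 3 := by gcongr
    have h6 : C * Q ≤ C * (C / η) ^ 3 * (Q / p ^ 3) := by
      rw [mul_assoc]
      apply mul_le_mul_of_nonneg_left _ hC
      rw [← mul_div_assoc, le_div_iff₀ (by positivity), mul_comm]
      exact mul_le_mul_of_nonneg_right h5 hQ0.le
    have h7 : 0 ≤ η * B ^ ((m + δ) / 2) := by positivity
    linarith

section tr
variable {n : ℕ}

lemma integral_ofLp {G : Type*} [NormedAddCommGroup G] [NormedSpace ℝ G] (h : (Fin n → ℝ) → G) :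
    ∫ y, h y = ∫ v : EuclideanSpace ℝ (Fin n), h (WithLp.ofLp v) :=
  ((EuclideanSpace.volume_preserving_symm_measurableEquiv_toLp (Fin n)).integral_comp
    (MeasurableEquiv.measurableEmbedding _) h).symm

lemma dotp_ofLp (v w : EuclideanSpace ℝ (Fin n)) : dotp (WithLp.ofLp v) (WithLp.ofLp w) = inner ℝ v w := by
  rw [PiLp.inner_apply]
  simp [dotp, mul_comm]

lemma exists_lift (f : 𝓢(Fin n → ℝ, ℂ)) : ∃ g : 𝓢(EuclideanSpace ℝ (Fin n), ℂ), ∀ x, g x = f (WithLp.ofLp x) :=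
  ⟨SchwartzMap.compCLMOfContinuousLinearEquiv ℝ (EuclideanSpace.equiv (Fin n) ℝ) f, fun x => rfl⟩

lemma FT_lift {f : 𝓢(Fin n → ℝ, ℂ)} {g : 𝓢(EuclideanSpace ℝ (Fin n), ℂ)} (hg : ∀ x, g x = f (WithLp.ofLp x))
    (w : EuclideanSpace ℝ (Fin n)) : FT f (WithLp.ofLp w) = (𝓕 g : 𝓢(EuclideanSpace ℝ (Fin n), ℂ)) w := by
  rw [SchwartzMap.fourier_coe, fourier_expi]
  unfold FT
  rw [integral_ofLp]
  congr 1; ext v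
  rw [dotp_ofLp, hg, mul_comm]

lemma sob_lift {f : 𝓢(Fin n → ℝ, ℂ)} {g : 𝓢(EuclideanSpace ℝ (Fin n), ℂ)} (hg : ∀ x, g x = f (WithLp.ofLp x)) (s : ℝ) :
    sobSq s f = ∫ ζ, (1 + ‖ζ‖ ^ 2) ^ s * ‖(𝓕 g : 𝓢(EuclideanSpace ℝ (Fin n), ℂ)) ζ‖ ^ 2 := by
  unfold sobSq
  rw [integral_ofLp]
  congr 1; ext v
  rw [FT_lift hg, wt_ofLp]

lemma pair_lift {f : 𝓢(Fin n → ℝ, ℂ)} {g : 𝓢(EuclideanSpace ℝ (Fin n), ℂ)} (hg : ∀ x, g x = f (WithLp.ofLp x))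
    (σ : (Fin n → ℝ) → (Fin n → ℝ) → ℂ) :
    ∫ x, OpKN σ f x * (starRingEnd ℂ) (f x) =
      BF (fun x ζ : EuclideanSpace ℝ (Fin n) => σ (WithLp.ofLp x) (WithLp.ofLp ζ))
        ⇑(𝓕 g : 𝓢(EuclideanSpace ℝ (Fin n), ℂ)) g := by
  unfold BF OpKN
  rw [integral_ofLp]
  congr 1; ext x
  rw [hg, integral_ofLp]
  congr 2; ext ζ
  rw [dotp_ofLp, FT_lift hg]

end tr
end GE

theorem garding_eta (n : ℕ) (hn : 1 ≤ n)
    (m ρ δ : ℝ) (hρ : ρ ≤ 1) (hδρ : δ < ρ) (hδ0 : 0 ≤ δ)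
    (σ : (Fin n → ℝ) → (Fin n → ℝ) → ℝ)
    (hσ : SymbolClass m ρ δ (fun x ξ => ((σ x ξ : ℝ) : ℂ)))
    (hpos : ∀ x ξ, 0 ≤ σ x ξ) :
    ∀ η > (0 : ℝ), ∃ C > 0, ∀ f : SchwartzMap (Fin n → ℝ) ℂ,
      -η * sobSq ((m + δ) / 2) (⇑f) - C * sobSq ((m - (ρ - δ)) / 2) (⇑f)
        ≤ (∫ x, OpKN (fun x ξ => ((σ x ξ : ℝ) : ℂ)) (⇑f) x
            * (starRingEnd ℂ) (f x)).re := by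
  intro η hη
  set F : EuclideanSpace ℝ (Fin n) × EuclideanSpace ℝ (Fin n) → ℝ :=
    fun X => σ (WithLp.ofLp X.1) (WithLp.ofLp X.2) with hF
  obtain ⟨A, hA⟩ := GE.good_symbol hρ hδρ hδ0 hσ
  have hFc : Continuous F := by
    have h1 : Continuous fun p : (Fin n → ℝ) × (Fin n → ℝ) => ((σ p.1 p.2 : ℝ) : ℂ) := hσ.1.continuous
    have h2 : Continuous fun p : (Fin n → ℝ) × (Fin n → ℝ) => σ p.1 p.2 := by
      have := Complex.continuous_re.comp h1
      simpa [Function.comp_def] using this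
    have h3 : Continuous fun X : EuclideanSpace ℝ (Fin n) × EuclideanSpace ℝ (Fin n) =>
      ((WithLp.ofLp X.1, WithLp.ofLp X.2) : (Fin n → ℝ) × (Fin n → ℝ)) := by fun_prop
    exact h2.comp h3
  obtain ⟨M, hM0, hM⟩ := GE.tuple_bound hσ 0
  have hFM : ∀ X, F X ≤ M * (1 + ‖X.2‖ ^ 2) ^ (m / 2) := by
    intro X
    have := hM Fin.elim0 (WithLp.ofLp X.1, WithLp.ofLp X.2)
    simp only [iteratedFDeriv_zero_apply, Finset.univ_eq_empty, Finset.sum_empty, add_zero, GE.wt_ofLp,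
      Complex.norm_real] at this
    exact (le_abs_self _).trans this
  have hε : 0 < (ρ - δ) / 2 := by linarith
  obtain ⟨C, hC0, hC⟩ := GE.global (m := m) (ε := (ρ - δ) / 2) (κ := (ρ + δ) / 2) (by linarith) (by linarith) hε
    hFc (fun X => hpos _ _) hFM A hA
  obtain ⟨C', hC'0, hC'⟩ := GE.interp (δ := δ) m hC0 hη hε hδ0
  refine ⟨C', hC'0, fun f => ?_⟩
  obtain ⟨g, hg⟩ := GE.exists_lift f
  rw [GE.sob_lift hg, GE.sob_lift hg, GE.pair_lift hg]
  refine le_trans ?_ (hC g)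
  set u : SchwartzMap (EuclideanSpace ℝ (Fin n)) ℂ := FourierTransform.fourier g with hu
  have hint : C * ∫ ζ, (1 + ‖ζ‖ ^ 2) ^ ((m - (ρ - δ) / 2 / 2) / 2) * ‖u ζ‖ ^ 2 ≤
      η * (∫ ζ, (1 + ‖ζ‖ ^ 2) ^ ((m + δ) / 2) * ‖u ζ‖ ^ 2) +
      C' * ∫ ζ, (1 + ‖ζ‖ ^ 2) ^ ((m - (ρ - δ)) / 2) * ‖u ζ‖ ^ 2 := by
    rw [← integral_const_mul, ← integral_const_mul, ← integral_const_mul,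
      ← integral_add ((GE.weight_integrable u _).const_mul _) ((GE.weight_integrable u _).const_mul _)]
    apply integral_mono ((GE.weight_integrable u _).const_mul _)
      (((GE.weight_integrable u _).const_mul _).add ((GE.weight_integrable u _).const_mul _))
    intro ζ
    have h1 := hC' (1 + ‖ζ‖ ^ 2) (by nlinarith [sq_nonneg ‖ζ‖])
    rw [show 2 * ((ρ - δ) / 2) = ρ - δ by ring] at h1
    have h2 := mul_le_mul_of_nonneg_right h1 (sq_nonneg ‖u ζ‖)
    simp only [Pi.add_apply]
    linarith
  linarith
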